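/- arXiv:1911.11850 — 12 statements merged into one kernel-verified Lean document; each statement's English description precedes it below -/
import Mathlib

section
/- A function ε : ℕ → ZMod 2 satisfies the Adem constraints if and only if ε is one of the following four functions: (i) ε(r) = 1 iff r = 1; (ii) ε(r) = 1 iff r ≥ 1; (iii) ε(r) = 1 iff r = 2^k − 1 for some k ≥ 1; (iv) ε(r) = 1 iff r is odd. (Equivalently: there are exactly four Dyer–Lashof algebra structures on F₂[u] compatible with the multiplication.) -/
/-!
Write `f = ∑ ε(r) x^r` over `𝔽₂`, so that `E ε s d` is the coefficient of `x^d` in `f^s`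
(`E_eq_coeff`), and let `g = f / x` (`reduced`).

**The four functions satisfy the constraints.** Consider the functional equation
`f(a) f(g(a) b (a + b)) = f(b) f(g(b) a (a + b))` (`FunEq`), taken at `a = z`, `b = βz` in
`𝔽₂⟦β⟧⟦z⟧`. With `c_i = ε(i) E(i + 1, n - i)`, its part of degree `n` in `z` reads
`∑ c_s (β + β²)^s = ∑ c_i β^(n - 2i) (1 + β)^i`. Multiplying by `(1 + β)^(-s-1)` and taking the
coefficient of `β^s` isolates `c_s` on the left, because `C(2k, k)` is even for `k > 0`, and
produces the right side of the Adem relation for `(s, r)` with `r = n - s`; this is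
`adem_of_funEq`. The four series satisfy `f = x`, `f = x + x f`, `f = x + x f²` and `f = x + x² f`
respectively, and in each case the functional equation is a formal consequence of that equation
in characteristic two.

**There are no others.** In the relation for `(s, r)` only the terms with `r ≤ 2i < r + s`
survive (`AdemConstraints.eq_sum`), so relations with small `s` are short.
* If `ε(2) = 1`, those with `s = 2` determine `ε` recursively (`unique_of_two`).
* If `ε(2) = 0`, those with `s = 2` kill all even values (`even_eq_zero`), and those with `s = 3`
  give `ε(4j + 3) = ε(3) ε(2j + 1)` (`rel_three`).
* If moreover `ε(3) = 1`, those with `s = 5` express `ε(4j + 1)` through lower values, so `ε` is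
  determined by `ε(5)` (`unique_of_three`).
* If `ε(2) = ε(3) = 0`, a first nonzero value beyond `ε(1)` would be some `ε(4j + 1)`, and the
  relation `s = 4j + 1`, `r = 12j + 2` reads `ε(4j + 1)² = 0` (`eq_zero_of_three`).
-/

/-- `E ε s d` is the sum over all `s`-tuples of naturals summing to `d` of the
products of the values of `ε`, in `ZMod 2`. -/
def E (ε : ℕ → ZMod 2) (s d : ℕ) : ZMod 2 :=
  ∑ f ∈ Finset.Nat.antidiagonalTuple s d, ∏ j, ε (f j)

/-- `ε` satisfies the Adem constraints encoding the Adem relations among the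
Dyer-Lashof operations on `F₂[u]` with `Q^{2r} u = ε r • u^{r+1}`. -/
def AdemConstraints (ε : ℕ → ZMod 2) : Prop :=
  ε 0 = 0 ∧ ε 1 = 1 ∧ ∀ s r : ℕ, r > 2 * s →
    ε s * E ε (s + 1) r =
      ∑ i ∈ (Finset.Icc (s + 1) (r - s - 1)).filter (fun i => r ≤ 2 * i),
        ((Nat.choose (i - s - 1) (2 * i - r) : ZMod 2) * ε i * E ε (i + 1) (r + s - i))

open PowerSeries

/-! ### Coefficients of powers of the generating series -/

lemma E_eq_coeff (ε : ℕ → ZMod 2) (s d : ℕ) : E ε s d = coeff d ((mk ε) ^ s) := by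
  have h : (mk ε : (ZMod 2)⟦X⟧) ^ s = ∏ _j : Fin s, mk ε := by simp
  rw [h, PowerSeries.coeff_prod, E]
  symm
  refine Finset.sum_bij (fun l _ => (l : Fin s → ℕ)) ?_ ?_ ?_ ?_
  · intro l hl
    rw [Finset.mem_finsuppAntidiag] at hl
    rw [Finset.Nat.mem_antidiagonalTuple]
    exact hl.1
  · intro a _ b _ hab
    exact DFunLike.coe_injective hab
  · intro b hb
    rw [Finset.Nat.mem_antidiagonalTuple] at hb
    refine ⟨Finsupp.equivFunOnFinite.symm b, ?_, ?_⟩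
    · rw [Finset.mem_finsuppAntidiag]
      exact ⟨hb, Finset.subset_univ _⟩
    · rfl
  · intro l _
    simp

/-- The power series `g` with `f = X * g`, where `f = ∑ ε r X ^ r`. -/
noncomputable def reduced (ε : ℕ → ZMod 2) : (ZMod 2)⟦X⟧ := mk fun n => ε (n + 1)

lemma mk_eq_X_mul_reduced {ε : ℕ → ZMod 2} (h0 : ε 0 = 0) : mk ε = X * reduced ε := by
  ext n
  cases n with
  | zero => simp [h0]
  | succ n => simp [reduced, coeff_succ_X_mul]

lemma E_add {ε : ℕ → ZMod 2} (h0 : ε 0 = 0) (n k : ℕ) :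
    E ε n (n + k) = coeff k (reduced ε ^ n) := by
  rw [E_eq_coeff, mk_eq_X_mul_reduced h0, mul_pow, add_comm n k, coeff_X_pow_mul]

lemma E_of_lt {ε : ℕ → ZMod 2} (h0 : ε 0 = 0) {n d : ℕ} (h : d < n) : E ε n d = 0 := by
  rw [E_eq_coeff, mk_eq_X_mul_reduced h0, mul_pow, coeff_X_pow_mul', if_neg (by omega)]

lemma E_self {ε : ℕ → ZMod 2} (h0 : ε 0 = 0) (h1 : ε 1 = 1) (n : ℕ) : E ε n n = 1 := by
  have := E_add h0 n 0
  simpa [reduced, h1] using this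

/-- Over `𝔽₂`, squaring a power series substitutes `X ^ 2` for `X`. -/
lemma sq_eq_expand (h : (ZMod 2)⟦X⟧) : h ^ 2 = expand 2 two_ne_zero h := by
  ext n
  have hn : n < n + 1 := n.lt_succ_self
  rw [sq, coeff_mul_eq_coeff_trunc_mul_trunc h h hn, ← sq, ← Polynomial.coe_pow, ← ZMod.expand_card,
    Polynomial.coeff_coe, Polynomial.coeff_expand (by norm_num), coeff_expand]
  split_ifs with hd
  · rw [coeff_trunc, if_pos (by omega)]
  · rfl

lemma E_two_mul (ε : ℕ → ZMod 2) (t m : ℕ) : E ε (2 * t) (2 * m) = E ε t m := by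
  rw [E_eq_coeff, E_eq_coeff, mul_comm 2 t, pow_mul, sq_eq_expand, coeff_expand_mul]

/-- If `ε k = 0` for `1 < k ≤ t`, then `f ^ n = X ^ n (1 + n ε(t + 1) X ^ t + ⋯)`. -/
lemma reduced_pow_gap {ε : ℕ → ZMod 2} (h1 : ε 1 = 1) {t : ℕ}
    (ht : 0 < t) (hgap : ∀ k, 1 < k → k ≤ t → ε k = 0) (n : ℕ) :
    ∃ w : (ZMod 2)⟦X⟧, reduced ε ^ n =
      1 + X ^ t * ((n : (ZMod 2)⟦X⟧) * (mk fun k => ε (k + t + 1)) + X ^ t * w) := by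
  have hg : reduced ε = 1 + X ^ t * mk fun k => ε (k + t + 1) := by
    ext k
    simp only [reduced, coeff_mk, map_add, coeff_one, coeff_X_pow_mul']
    by_cases hk : k = 0
    · subst hk
      simp [h1, ht.ne']
    · by_cases hkt : t ≤ k
      · simp [hk, hkt]
      · simp [hk, hkt, hgap (k + 1) (by omega) (by omega)]
  induction n with
  | zero => exact ⟨0, by simp⟩
  | succ n ih =>
    obtain ⟨w, hw⟩ := ih
    rw [pow_succ, hw, hg]
    set m := (mk fun k => ε (k + t + 1) : (ZMod 2)⟦X⟧)
    exact ⟨w * (1 + X ^ t * m) + (n : (ZMod 2)⟦X⟧) * m ^ 2, by push_cast; ring⟩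

lemma E_gap_zero {ε : ℕ → ZMod 2} (h0 : ε 0 = 0) (h1 : ε 1 = 1) {t : ℕ}
    (hgap : ∀ k, 1 < k → k ≤ t → ε k = 0) (n : ℕ) {k : ℕ} (hk : 0 < k) (hkt : k < t) :
    E ε n (n + k) = 0 := by
  obtain ⟨w, hw⟩ := reduced_pow_gap h1 (by omega) hgap n
  rw [E_add h0, hw, map_add, coeff_X_pow_mul', if_neg (by omega), coeff_one,
    if_neg (by omega), add_zero]

lemma E_gap {ε : ℕ → ZMod 2} (h0 : ε 0 = 0) (h1 : ε 1 = 1) {t : ℕ}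
    (ht : 0 < t) (hgap : ∀ k, 1 < k → k ≤ t → ε k = 0) (n : ℕ) :
    E ε n (n + t) = n * ε (t + 1) := by
  obtain ⟨w, hw⟩ := reduced_pow_gap h1 ht hgap n
  rw [E_add h0, hw, map_add, coeff_X_pow_mul', if_pos le_rfl, coeff_one,
    if_neg (by omega), zero_add, Nat.sub_self, ← map_natCast (C (R := ZMod 2))]
  simp [Nat.pos_iff_ne_zero.1 ht]

/-- The coefficients `E ε n d` with `d ≤ m + n - 2` depend only on the values of `ε` below `m`,
and `E ε n (m + n - 1)` depends on `ε m` only through the summand `n * ε m`. -/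
lemma E_sub_E {ε δ : ℕ → ZMod 2} (h0 : ε 0 = 0) (h1 : ε 1 = 1) (d0 : δ 0 = 0) {m : ℕ}
    (hm : 2 ≤ m) (hag : ∀ k < m, ε k = δ k) (n : ℕ) :
    (∀ k < m - 1, E ε n (n + k) = E δ n (n + k)) ∧
      E ε n (n + (m - 1)) = E δ n (n + (m - 1)) + n * (ε m - δ m) := by
  set v : (ZMod 2)⟦X⟧ := mk fun k => ε (k + m) - δ (k + m) with hv
  have hg : reduced ε = reduced δ + X ^ (m - 1) * v := by
    ext k
    simp only [reduced, hv, coeff_mk, map_add, coeff_X_pow_mul']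
    by_cases hk : m - 1 ≤ k
    · rw [if_pos hk, show k - (m - 1) + m = k + 1 by omega]
      ring
    · rw [if_neg hk, hag _ (by omega), add_zero]
  have key : ∃ w : (ZMod 2)⟦X⟧, reduced ε ^ n =
      reduced δ ^ n + X ^ (m - 1) * ((n : (ZMod 2)⟦X⟧) * v + X * w) := by
    have hδ : ∃ u : (ZMod 2)⟦X⟧, reduced δ = 1 + X * u :=
      ⟨mk fun k => δ (k + 2), by
        ext k
        cases k with
        | zero => simp [reduced, ← hag 1 (by omega), h1]
        | succ k => simp [reduced, coeff_succ_X_mul, coeff_one]⟩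
    obtain ⟨u, hu⟩ := hδ
    induction n with
    | zero => exact ⟨0, by simp⟩
    | succ n ih =>
      obtain ⟨w, hw⟩ := ih
      have hpow : ∃ u', reduced δ ^ n = 1 + X * u' := by
        have : (1 + X * u - 1) ∣ (1 + X * u) ^ n - 1 ^ n := sub_dvd_pow_sub_pow _ _ _
        obtain ⟨c, hc⟩ := this
        exact ⟨u * c, by rw [hu]; linear_combination hc⟩
      obtain ⟨u', hu'⟩ := hpow
      obtain ⟨j, rfl⟩ : ∃ j, m = j + 2 := ⟨m - 2, by omega⟩
      refine ⟨w * reduced δ + (n : (ZMod 2)⟦X⟧) * v * u + u' * v +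
        X ^ j * v * ((n : (ZMod 2)⟦X⟧) * v + X * w), ?_⟩
      rw [pow_succ, hw, hg, pow_succ, hu', show j + 2 - 1 = j + 1 by omega]
      push_cast
      rw [hu]
      ring
  obtain ⟨w, hw⟩ := key
  constructor
  · intro k hk
    rw [E_add h0, E_add d0, hw, map_add, coeff_X_pow_mul', if_neg (by omega), add_zero]
  · rw [E_add h0, E_add d0, hw, map_add, coeff_X_pow_mul', if_pos le_rfl, Nat.sub_self,
      ← map_natCast (C (R := ZMod 2))]
    simp [hv]

/-- The Adem relation for `(s, r)` restricted to a window `m ≤ i < m + N` with `m = ⌈r / 2⌉`: terms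
with `2 * i ≥ r + s` vanish because `E ε (i + 1) (r + s - i)` does, and the terms of the window outside
the original range have vanishing binomial coefficient. -/
lemma AdemConstraints.eq_sum {ε : ℕ → ZMod 2} (h : AdemConstraints ε) {s r : ℕ} (m N : ℕ)
    (hr : 2 * s < r) (hm : r ≤ 2 * m) (hm' : 2 * m ≤ r + 1) (hN : r + s ≤ 2 * m + 2 * N) :
    ε s * E ε (s + 1) r = ∑ i ∈ Finset.Ico m (m + N),
      ((Nat.choose (i - s - 1) (2 * i - r) : ZMod 2) * ε i * E ε (i + 1) (r + s - i)) := by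
  obtain ⟨h0, h1, h⟩ := h
  rw [h s r hr]
  apply Finset.sum_congr_of_eq_on_inter
  · intro i hi hi'
    simp only [Finset.mem_filter, Finset.mem_Icc, Finset.mem_Ico] at hi hi'
    rw [E_of_lt h0 (by omega), mul_zero]
  · intro i hi hi'
    simp only [Finset.mem_filter, Finset.mem_Icc, Finset.mem_Ico] at hi hi'
    rw [Nat.choose_eq_zero_of_lt (by omega)]
    simp
  · intros
    rfl

/-! ### Uniqueness -/

lemma zmod_two_cases (x : ZMod 2) : x = 0 ∨ x = 1 := by
  revert x
  decide

lemma natCast_odd {n : ℕ} (hn : n % 2 = 1) : (n : ZMod 2) = 1 := by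
  rw [← Nat.cast_one]
  exact (ZMod.natCast_eq_natCast_iff' n 1 2).2 hn

lemma natCast_even {n : ℕ} (hn : n % 2 = 0) : (n : ZMod 2) = 0 := by
  rw [← Nat.cast_zero]
  exact (ZMod.natCast_eq_natCast_iff' n 0 2).2 hn

/-- The Adem relation `s = 2`, `r = 2 * i`, with its single surviving term. -/
lemma rel_two_even {ε : ℕ → ZMod 2} (h : AdemConstraints ε) {i : ℕ} (hi : 3 ≤ i) :
    ε 2 * E ε 3 (2 * i) = ε i * ((i + 1 : ℕ) * ε 2) := by
  rw [h.eq_sum (s := 2) i 1 (by omega) le_rfl (by omega) (by omega), Nat.Ico_succ_singleton,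
    Finset.sum_singleton, Nat.sub_self, show 2 * i + 2 - i = i + 1 + 1 by omega,
    E_gap h.1 h.2.1 one_pos (by omega)]
  simp

/-- The Adem relation `s = 2`, `r = 2 * i - 1`, with its single surviving term. -/
lemma rel_two_odd {ε : ℕ → ZMod 2} (h : AdemConstraints ε) {i : ℕ} (hi : 3 ≤ i) :
    ε 2 * E ε 3 (2 * i - 1) = (i - 3 : ℕ) * ε i := by
  rw [h.eq_sum (s := 2) i 1 (by omega) (by omega) (by omega) (by omega), Nat.Ico_succ_singleton,
    Finset.sum_singleton, show 2 * i - (2 * i - 1) = 1 by omega,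
    show 2 * i - 1 + 2 - i = i + 1 by omega, E_self h.1 h.2.1, Nat.choose_one_right, mul_one,
    show i - 2 - 1 = i - 3 by omega]

/-- The value `ε m` occurs in `E ε 3 (m + 2)` with coefficient `3 = 1`, and the relations `s = 2`
express `E ε 3 (m + 2)` through lower values. -/
lemma unique_of_two {ε δ : ℕ → ZMod 2} (h : AdemConstraints ε) (h' : AdemConstraints δ)
    (h2 : ε 2 = 1) (h2' : δ 2 = 1) (k : ℕ) : ε k = δ k := by
  induction k using Nat.strong_induction_on with
  | _ m ih =>
    rcases (by omega : m = 0 ∨ m = 1 ∨ m = 2 ∨ 3 ≤ m) with rfl | rfl | rfl | hm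
    · rw [h.1, h'.1]
    · rw [h.2.1, h'.2.1]
    · rw [h2, h2']
    have key := (E_sub_E h.1 h.2.1 h'.1 (by omega) ih 3).2
    have hE : E ε 3 (3 + (m - 1)) = E δ 3 (3 + (m - 1)) := by
      obtain ⟨j, hj | hj⟩ : ∃ j, m = 2 * j ∨ m = 2 * j + 1 := ⟨m / 2, by omega⟩
      · have e := rel_two_even h (i := j + 1) (by omega)
        have e' := rel_two_even h' (i := j + 1) (by omega)
        rw [h2] at e
        rw [h2'] at e'
        rw [show 3 + (m - 1) = 2 * (j + 1) by omega]
        rw [one_mul] at e e'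
        rw [e, e', ih (j + 1) (by omega)]
      · have e := rel_two_odd h (i := j + 2) (by omega)
        have e' := rel_two_odd h' (i := j + 2) (by omega)
        rw [h2] at e
        rw [h2'] at e'
        rw [show 3 + (m - 1) = 2 * (j + 2) - 1 by omega]
        have hlow : ((j + 2 - 3 : ℕ) : ZMod 2) * ε (j + 2) = (j + 2 - 3 : ℕ) * δ (j + 2) := by
          by_cases hj1 : j = 1
          · subst hj1
            simp
          · rw [ih (j + 2) (by omega)]
        rw [one_mul] at e e'
        rw [e, e', hlow]
    rw [hE, natCast_odd (by norm_num), one_mul] at key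
    linear_combination -key

lemma even_eq_zero {ε : ℕ → ZMod 2} (h : AdemConstraints ε) (h2 : ε 2 = 0) {i : ℕ}
    (hi : i % 2 = 0) : ε i = 0 := by
  rcases (by omega : i = 0 ∨ i = 2 ∨ 3 ≤ i) with rfl | rfl | h3
  · exact h.1
  · exact h2
  · have e := rel_two_odd h h3
    rw [h2, natCast_odd (by omega)] at e
    simpa using e.symm

/-- The Adem relation `s = 3`, `r = 8 * j + 4`, where `E ε 4 r = ε (r / 4)`. -/
lemma rel_three {ε : ℕ → ZMod 2} (h : AdemConstraints ε) (h2 : ε 2 = 0) (j : ℕ) (hj : 1 ≤ j) :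
    ε (4 * j + 3) = ε 3 * ε (2 * j + 1) := by
  have e := h.eq_sum (s := 3) (r := 2 * (2 * (2 * j + 1))) (2 * (2 * j + 1)) 2
    (by omega) le_rfl (by omega) (by omega)
  have hE : E ε (3 + 1) (2 * (2 * (2 * j + 1))) = ε (2 * j + 1) := by
    rw [show 3 + 1 = 2 * (2 * 1) by norm_num, E_two_mul, E_two_mul, E_eq_coeff]
    simp
  have hc : ((Nat.choose (2 * (2 * j + 1) + 1 - 3 - 1) 2 : ℕ) : ZMod 2) = 1 := by
    obtain ⟨i, rfl⟩ : ∃ i, j = i + 1 := ⟨j - 1, by omega⟩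
    rw [show 2 * (2 * (i + 1) + 1) + 1 - 3 - 1 = 4 * i + 3 by omega]
    apply natCast_odd
    rw [Nat.choose_two_right, show (4 * i + 3) * (4 * i + 3 - 1) = 2 * ((4 * i + 3) * (2 * i + 1)) by
      rw [show 4 * i + 3 - 1 = 2 * (2 * i + 1) by omega]; ring, Nat.mul_div_cancel_left _ two_pos]
    rw [Nat.mul_mod]
    have a : (4 * i + 3) % 2 = 1 := by omega
    have b : (2 * i + 1) % 2 = 1 := by omega
    rw [a, b]
  rw [hE, Finset.sum_Ico_succ_top (by omega), Nat.Ico_succ_singleton, Finset.sum_singleton,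
    even_eq_zero h h2 (i := 2 * (2 * j + 1)) (by omega),
    show 2 * (2 * (2 * j + 1) + 1) - 2 * (2 * (2 * j + 1)) = 2 by omega, hc,
    show 2 * (2 * (2 * j + 1)) + 3 - (2 * (2 * j + 1) + 1) = 2 * (2 * j + 1) + 1 + 1 by omega,
    E_self h.1 h.2.1] at e
  rw [show 4 * j + 3 = 2 * (2 * j + 1) + 1 by ring, e]
  ring

/-- The Adem relation `s = 5`, `r = 8 * j + 2`; its right side involves only values of `ε` below
`4 * j + 1`. -/
lemma rel_five {ε : ℕ → ZMod 2} (h : AdemConstraints ε) (h2 : ε 2 = 0) (h3 : ε 3 = 1)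
    (j : ℕ) (hj : 2 ≤ j) :
    ε (4 * j + 1) = ε 5 * E ε 3 (4 * j + 1) - (Nat.choose (4 * j - 3) 4 : ZMod 2) * ε (2 * j + 1) := by
  have e := h.eq_sum (s := 5) (r := 2 * (4 * j + 1)) (4 * j + 1) 3
    (by omega) le_rfl (by omega) (by omega)
  have hE : E ε (4 * j + 1 + 1) (2 * (4 * j + 1) + 5 - (4 * j + 1)) = 1 := by
    rw [show 2 * (4 * j + 1) + 5 - (4 * j + 1) = 2 * (2 * j + 1 + 2) by omega,
      show 4 * j + 1 + 1 = 2 * (2 * j + 1) by ring, E_two_mul, E_gap h.1 h.2.1 two_pos, h3,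
      natCast_odd (by omega), one_mul]
    intro k hk hk'
    rw [show k = 2 by omega, h2]
  rw [show 5 + 1 = 2 * 3 by norm_num, E_two_mul, Finset.sum_Ico_succ_top (by omega),
    Finset.sum_Ico_succ_top (by omega), Nat.Ico_succ_singleton, Finset.sum_singleton, hE,
    even_eq_zero h h2 (i := 4 * j + 1 + 1) (by omega),
    show 2 * (4 * j + 1 + 2) - 2 * (4 * j + 1) = 4 by omega,
    show 4 * j + 1 + 2 - 5 - 1 = 4 * j - 3 by omega,
    show 2 * (4 * j + 1) + 5 - (4 * j + 1 + 2) = 4 * j + 1 + 2 + 1 by omega,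
    E_self h.1 h.2.1, rel_three h h2 j (by omega), h3, Nat.sub_self, Nat.choose_zero_right] at e
  rw [e]
  push_cast
  ring

lemma unique_of_three {ε δ : ℕ → ZMod 2} (h : AdemConstraints ε) (h' : AdemConstraints δ)
    (h2 : ε 2 = 0) (h2' : δ 2 = 0) (h3 : ε 3 = 1) (h3' : δ 3 = 1) (h5 : ε 5 = δ 5) (k : ℕ) :
    ε k = δ k := by
  induction k using Nat.strong_induction_on with
  | _ m ih =>
    obtain ⟨j, hj⟩ : ∃ j, m % 2 = 0 ∨ m = 4 * j + 1 ∨ m = 4 * j + 3 := ⟨m / 4, by omega⟩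
    rcases hj with hm | rfl | rfl
    · rw [even_eq_zero h h2 hm, even_eq_zero h' h2' hm]
    · rcases (by omega : j = 0 ∨ j = 1 ∨ 2 ≤ j) with rfl | rfl | hj
      · simp [h.2.1, h'.2.1]
      · simpa using h5
      · have key := (E_sub_E h.1 h.2.1 h'.1 (by omega) ih 3).1 (4 * j - 2) (by omega)
        rw [show 3 + (4 * j - 2) = 4 * j + 1 by omega] at key
        rw [rel_five h h2 h3 j hj, rel_five h' h2' h3' j hj, h5, key, ih _ (by omega)]
    · rcases Nat.eq_zero_or_pos j with rfl | hj
      · simp [h3, h3']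
      · rw [rel_three h h2 j hj, rel_three h' h2' j hj, h3, h3', ih _ (by omega)]

/-- At a putative first nonzero value `ε (4 * j + 1)`, the relation `s = 4 * j + 1`, `r = 12 * j + 2`
has left side `ε (4 * j + 1) ^ 2` and right side zero. -/
lemma eq_zero_of_three {ε : ℕ → ZMod 2} (h : AdemConstraints ε)
    (h2 : ε 2 = 0) (h3 : ε 3 = 0) (k : ℕ) (hk : 1 < k) : ε k = 0 := by
  induction k using Nat.strong_induction_on with
  | _ m ih =>
    obtain ⟨j, hj⟩ : ∃ j, m % 2 = 0 ∨ m = 4 * j + 1 ∨ m = 4 * j + 3 := ⟨m / 4, by omega⟩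
    rcases hj with hm | rfl | rfl
    · exact even_eq_zero h h2 hm
    · have hgap : ∀ k, 1 < k → k ≤ 4 * j → ε k = 0 := fun k hk hk' => ih k (by omega) hk
      have e := h.eq_sum (s := 4 * j + 1) (r := 2 * (2 * j + 1 + 4 * j)) (2 * j + 1 + 4 * j)
        (2 * j + 1) (by omega) le_rfl (by omega) (by omega)
      rw [show 4 * j + 1 + 1 = 2 * (2 * j + 1) by ring, E_two_mul,
        E_gap h.1 h.2.1 (by omega) hgap, natCast_odd (by omega), one_mul,
        Finset.sum_eq_zero] at e
      · exact mul_self_eq_zero.1 e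
      -- The first term has an even factor `6 * j + 2`, the middle ones fall into the gap of `ε`,
      -- and the last has a vanishing binomial coefficient.
      · intro i hi
        rw [Finset.mem_Ico] at hi
        rcases (by omega : i = 6 * j + 1 ∨ (6 * j + 1 < i ∧ i < 8 * j + 1) ∨ i = 8 * j + 1) with
          rfl | hi' | rfl
        · rw [show 2 * (2 * j + 1 + 4 * j) + (4 * j + 1) - (6 * j + 1) = 6 * j + 1 + 1 + 4 * j by
            omega, E_gap h.1 h.2.1 (by omega) hgap, natCast_even (n := 6 * j + 1 + 1) (by omega)]
          ring
        · rw [show 2 * (2 * j + 1 + 4 * j) + (4 * j + 1) - i = i + 1 + (16 * j + 2 - 2 * i) by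
            omega, E_gap_zero h.1 h.2.1 hgap _ (by omega) (by omega), mul_zero]
        · rw [Nat.choose_eq_zero_of_lt (by omega)]
          simp
    · rcases Nat.eq_zero_or_pos j with rfl | hj
      · exact h3
      · rw [rel_three h h2 j hj, h3, zero_mul]

/-! ### Algebraic identities in characteristic two -/

section Algebra

variable {S : Type*} [CommRing S] [CharP S 2]

/-- The functional equation, up to a nonzero factor, for a solution of `f = x + x f`: here
`p = f(z)`, `q = f(βz)`, `P = f(Y)` and `Q = f(W)`, where `Y` and `W` are the two inner arguments.
In characteristic two both sides have the same denominator. -/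
lemma alg_two {β z p q Y W P Q : S}
    (hp : p = z + z * p) (hq : q = β * z + β * z * q) (hY : Y = β * (1 + β) * z * p)
    (hW : β * W = (1 + β) * z * q) (hP : P = Y + Y * P) (hQ : Q = W + W * Q) :
    β * ((1 - z) * (1 - z - β * (1 + β) * z ^ 2)) * (p * P - q * Q) = 0 := by
  have hY' : (1 - z) * Y = β * (1 + β) * z ^ 2 := by
    linear_combination (1 - z) * hY + β * (1 + β) * z * hp
  have hW' : (1 - β * z) * (β * W) = β * (1 + β) * z ^ 2 := by
    linear_combination (1 - β * z) * hW + (1 + β) * z * hq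
  have h1 : (1 - z) * (1 - z - β * (1 + β) * z ^ 2) * (p * P) = β * (1 + β) * z ^ 3 := by
    rw [← hY']
    linear_combination (1 - z) ^ 2 * p * hP + (1 - z) * Y * hp + z * hY'
  have h2 : β * ((1 - β * z) * (1 - β * z - (1 + β) * z ^ 2)) * (q * Q) =
      β ^ 2 * (1 + β) * z ^ 3 := by
    linear_combination (1 - β * z) * q * Q * hW' + (1 - β * z) ^ 2 * q * β * hQ
      + (1 - β * z) * β * W * hq + β * z * hW'
  have hD : (1 - z) * (1 - z - β * (1 + β) * z ^ 2) =
      (1 - β * z) * (1 - β * z - (1 + β) * z ^ 2) := by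
    have := CharTwo.two_eq_zero (R := S)
    grind
  rw [mul_sub]
  nth_rewrite 2 [hD]
  linear_combination β * h1 - h2

/-- The analogue of `alg_two` for a solution of `f = x + x² f`. -/
lemma alg_four {β z p q Y W P Q : S}
    (hp : p = z + z ^ 2 * p) (hq : q = β * z + (β * z) ^ 2 * q) (hY : Y = β * (1 + β) * z * p)
    (hW : β * W = (1 + β) * z * q) (hP : P = Y + Y ^ 2 * P) (hQ : Q = W + W ^ 2 * Q) :
    β ^ 2 * ((1 - z ^ 2) ^ 2 - (β * (1 + β) * z ^ 2) ^ 2) * (p * P - q * Q) = 0 := by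
  have hY' : (1 - z ^ 2) * Y = β * (1 + β) * z ^ 2 := by
    linear_combination (1 - z ^ 2) * hY + β * (1 + β) * z * hp
  have hW' : (1 - (β * z) ^ 2) * (β * W) = β * (1 + β) * z ^ 2 := by
    linear_combination (1 - (β * z) ^ 2) * hW + (1 + β) * z * hq
  have h1 : ((1 - z ^ 2) ^ 2 - (β * (1 + β) * z ^ 2) ^ 2) * (p * P) = β * (1 + β) * z ^ 3 := by
    rw [← hY']
    linear_combination (1 - z ^ 2) ^ 2 * p * hP + (1 - z ^ 2) * Y * hp + z * hY'
  have h2 : β ^ 2 * ((1 - (β * z) ^ 2) ^ 2 - ((1 + β) * z ^ 2) ^ 2) * (q * Q) =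
      β ^ 3 * (1 + β) * z ^ 3 := by
    linear_combination ((1 - (β * z) ^ 2) * (β * W) + β * (1 + β) * z ^ 2) * q * Q * hW'
      + (1 - (β * z) ^ 2) ^ 2 * q * β ^ 2 * hQ
      + (1 - (β * z) ^ 2) * β ^ 2 * W * hq + β ^ 2 * z * hW'
  have hD : (1 - z ^ 2) ^ 2 - (β * (1 + β) * z ^ 2) ^ 2 =
      (1 - (β * z) ^ 2) ^ 2 - ((1 + β) * z ^ 2) ^ 2 := by
    have := CharTwo.two_eq_zero (R := S)
    grind
  rw [mul_sub]
  nth_rewrite 2 [hD]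
  linear_combination β ^ 2 * h1 - h2

/-- For `f = x + x f²`, the quantity `d = (1 + β) P + q (p + β q)` satisfies an equation
`d = z * c * d ^ 2`, which forces `P = q (p + β q) / (1 + β)`. The notation is that of `alg_two`. -/
lemma alg_three_P {β z p q Y P : S}
    (hp : p = z + z * p ^ 2) (hq : q = β * z + β * z * q ^ 2) (hY : Y = β * (1 + β) * z * p)
    (hP : P = Y + Y * P ^ 2) (hrel : β * p * (1 + q ^ 2) = q * (1 + p ^ 2)) :
    (1 + β) * P + q * (p + β * q) = β * z * p * ((1 + β) * P + q * (p + β * q)) ^ 2 := by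
  grind

/-- The counterpart of `alg_three_P` for `Q`, which forces `Q = p (p + β q) / (1 + β)`; hence
`p P = q Q`. -/
lemma alg_three_Q {β z p q W Q : S}
    (hp : p = z + z * p ^ 2) (hq : q = β * z + β * z * q ^ 2)
    (hW : β * W = (1 + β) * z * q)
    (hQ : Q = W + W * Q ^ 2) (hrel : β * p * (1 + q ^ 2) = q * (1 + p ^ 2)) :
    β * ((1 + β) * Q + p * (p + β * q)) = z * q * ((1 + β) * Q + p * (p + β * q)) ^ 2 := by
  grind

end Algebra

/-! ### The functional equation -/

section Composition

variable {R : Type*} [CommRing R]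

/-- The composite `F(a)` of power series; meaningful when `a` has no constant term. Fixing the
base ring here keeps `R` acting on itself by multiplication when `R` is itself a ring of power
series, for which there are several `Algebra` instances. -/
noncomputable def comp (F a : R⟦X⟧) : R⟦X⟧ := subst a F

lemma hasSubst_of_dvd {a : R⟦X⟧} (ha : X ∣ a) : HasSubst a :=
  HasSubst.of_constantCoeff_zero' (X_dvd_iff.1 ha)

lemma comp_add {a : R⟦X⟧} (ha : X ∣ a) (F G : R⟦X⟧) : comp (F + G) a = comp F a + comp G a :=
  subst_add (hasSubst_of_dvd ha) F G

lemma comp_mul {a : R⟦X⟧} (ha : X ∣ a) (F G : R⟦X⟧) : comp (F * G) a = comp F a * comp G a :=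
  subst_mul (hasSubst_of_dvd ha) F G

lemma comp_pow {a : R⟦X⟧} (ha : X ∣ a) (F : R⟦X⟧) (n : ℕ) : comp (F ^ n) a = comp F a ^ n :=
  subst_pow (hasSubst_of_dvd ha) F n

lemma comp_X {a : R⟦X⟧} (ha : X ∣ a) : comp X a = a :=
  subst_X (hasSubst_of_dvd ha)

lemma coeff_mul_comp {a : R⟦X⟧} (ha : X ∣ a) (F b : R⟦X⟧) (n : ℕ) :
    coeff n (b * comp F a) = ∑ s ∈ Finset.range (n + 1), coeff s F * coeff n (b * a ^ s) := by
  have hd := eq_X_pow_mul_shift_add_trunc (n + 1) F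
  have ht : comp (trunc (n + 1) F : R⟦X⟧) a = Polynomial.aeval a (trunc (n + 1) F) :=
    subst_coe (hasSubst_of_dvd ha) _
  have hz : coeff n (b * (a ^ (n + 1) * comp (mk fun i => coeff (i + (n + 1)) F) a)) = 0 := by
    apply (X_pow_dvd_iff (n := n + 1)).1 _ n n.lt_succ_self
    exact Dvd.dvd.mul_left (Dvd.dvd.mul_right (pow_dvd_pow_of_dvd ha _) _) _
  conv_lhs => rw [hd]
  rw [comp_add ha, comp_mul ha, comp_pow ha, comp_X ha, ht, mul_add, map_add, hz, zero_add,
    Polynomial.aeval_eq_sum_range' (natDegree_trunc_lt F n), Finset.mul_sum, map_sum]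
  refine Finset.sum_congr rfl fun s hs => ?_
  rw [coeff_trunc, if_pos (Finset.mem_range.1 hs), mul_smul_comm, coeff_smul, smul_eq_mul]

end Composition

instance charP_two {R : Type*} [CommRing R] [CharP R 2] : CharP R⟦X⟧ 2 :=
  charP_of_injective_ringHom (C_injective (R := R)) 2

section Symmetry

/-- The ring `𝔽₂⟦β⟧`. -/
local notation "𝔹" => PowerSeries (ZMod 2)

/-- The ring `𝔽₂⟦β⟧⟦z⟧`. -/
local notation "𝕊" => PowerSeries (PowerSeries (ZMod 2))

/-- `f(z) = ∑ ε r z ^ r` in `𝔽₂⟦β⟧⟦z⟧`. -/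
noncomputable def fz (ε : ℕ → ZMod 2) : 𝕊 := map C (mk ε)

/-- `f(z) / z`. -/
noncomputable def gz (ε : ℕ → ZMod 2) : 𝕊 := map C (reduced ε)

/-- The variable `β`, regarded as a constant series in `z`. -/
noncomputable def bvar : 𝕊 := C (X : 𝔹)

/-- `f(βz)`. -/
noncomputable def fbz (ε : ℕ → ZMod 2) : 𝕊 := rescale (X : 𝔹) (fz ε)

/-- The argument `g(a) b (a + b)` at `a = z`, `b = βz`, where `g(x) = f(x) / x`. -/
noncomputable def argP (ε : ℕ → ZMod 2) : 𝕊 := bvar * (1 + bvar) * X * fz ε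

/-- The argument `g(b) a (a + b)` at `a = z`, `b = βz`, where `g(x) = f(x) / x`. -/
noncomputable def argQ (ε : ℕ → ZMod 2) : 𝕊 := (1 + bvar) * X ^ 2 * rescale (X : 𝔹) (gz ε)

lemma fz_eq {ε : ℕ → ZMod 2} (h0 : ε 0 = 0) : fz ε = X * gz ε := by
  rw [fz, mk_eq_X_mul_reduced h0, map_mul, map_X, gz]

lemma fbz_eq {ε : ℕ → ZMod 2} (h0 : ε 0 = 0) :
    fbz ε = bvar * X * rescale (X : 𝔹) (gz ε) := by
  rw [fbz, fz_eq h0, map_mul, rescale_X, bvar]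

lemma bvar_mul_argQ {ε : ℕ → ZMod 2} (h0 : ε 0 = 0) :
    bvar * argQ ε = (1 + bvar) * X * fbz ε := by
  rw [argQ, fbz_eq h0]
  ring

lemma X_dvd_argP (ε : ℕ → ZMod 2) : (X : 𝕊) ∣ argP ε :=
  ⟨bvar * (1 + bvar) * fz ε, by rw [argP]; ring⟩

lemma X_dvd_argQ (ε : ℕ → ZMod 2) : (X : 𝕊) ∣ argQ ε :=
  ⟨(1 + bvar) * X * rescale (X : 𝔹) (gz ε), by rw [argQ]; ring⟩

lemma coeff_P (ε : ℕ → ZMod 2) {n s : ℕ} (hs : s ≤ n) :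
    coeff n (fz ε * argP ε ^ s) = (X + X ^ 2) ^ s * C (E ε (s + 1) (n - s)) := by
  have : fz ε * argP ε ^ s = C ((X + X ^ 2 : 𝔹) ^ s) * (X ^ s * map C (mk ε ^ (s + 1))) := by
    rw [argP, bvar, map_pow, map_pow (map C), ← fz, map_add, map_pow C,
      show C (X : 𝔹) * (1 + C X) * X * fz ε = (C X + C X ^ 2) * (X * fz ε) by ring, mul_pow]
    ring
  rw [this, coeff_C_mul, coeff_X_pow_mul', if_pos hs, coeff_map, E_eq_coeff]

lemma coeff_Q {ε : ℕ → ZMod 2} (h0 : ε 0 = 0) (n i : ℕ) :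
    coeff n (fbz ε * argQ ε ^ i) = X ^ (n - 2 * i) * (1 + X) ^ i * C (E ε (i + 1) (n - i)) := by
  have : fbz ε * argQ ε ^ i = C (X * (1 + X : 𝔹) ^ i) *
      (X ^ (2 * i + 1) * rescale (X : 𝔹) (map C (reduced ε ^ (i + 1)))) := by
    rw [argQ, fbz_eq h0, bvar, map_mul, map_pow C, map_pow (map C), ← gz, map_add, map_one,
      map_pow (rescale _), mul_pow, mul_pow]
    ring
  rw [this, coeff_C_mul, coeff_X_pow_mul']
  split_ifs with h
  · rw [coeff_rescale, coeff_map, ← E_add h0, show i + 1 + (n - (2 * i + 1)) = n - i by omega,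
      show n - 2 * i = n - (2 * i + 1) + 1 by omega]
    ring
  · rw [E_of_lt h0 (by omega)]
    simp

/-- The functional equation
`f(a) f(g(a) b (a + b)) = f(b) f(g(b) a (a + b))` at `a = z`, `b = βz`. -/
def FunEq (ε : ℕ → ZMod 2) : Prop :=
  fz ε * comp (fz ε) (argP ε) = fbz ε * comp (fz ε) (argQ ε)

lemma FunEq.coeff_eq {ε : ℕ → ZMod 2} (h0 : ε 0 = 0) (h : FunEq ε) (n : ℕ) :
    ∑ s ∈ Finset.range (n + 1), C (ε s * E ε (s + 1) (n - s)) * (X + X ^ 2 : 𝔹) ^ s =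
      ∑ i ∈ Finset.range (n + 1), C (ε i * E ε (i + 1) (n - i)) *
        (X ^ (n - 2 * i) * (1 + X : 𝔹) ^ i) := by
  have hc := congrArg (coeff n) h
  rw [coeff_mul_comp (X_dvd_argP ε), coeff_mul_comp (X_dvd_argQ ε)] at hc
  have hf : ∀ s, coeff s (fz ε) = C (ε s) := fun s => by simp [fz]
  simp only [hf] at hc
  convert hc using 1
  · refine Finset.sum_congr rfl fun s hs => ?_
    rw [coeff_P ε (by rw [Finset.mem_range] at hs; omega), map_mul]
    ring
  · refine Finset.sum_congr rfl fun i _ => ?_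
    rw [coeff_Q h0, map_mul]
    ring

lemma one_add_X_mul_mk_one : (1 + X : 𝔹) * mk 1 = 1 := by
  have := mk_one_mul_one_sub_eq_one (ZMod 2)
  rwa [CharTwo.sub_eq_add, mul_comm] at this

/-- Multiplying by `mk 1 ^ (s + 1) = (1 + β) ^ (-s - 1)` and extracting `β ^ s` isolates the `s`-th
power of `β + β ^ 2`; for `j < s` the coefficient is an even central binomial. -/
lemma coeff_residue_left (s j : ℕ) :
    coeff s ((X + X ^ 2 : 𝔹) ^ j * mk 1 ^ (s + 1)) = if j = s then 1 else 0 := by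
  rw [show (X + X ^ 2 : 𝔹) = X * (1 + X) by ring, mul_pow, mul_assoc, coeff_X_pow_mul']
  split_ifs with h1 h2 h2
  · subst h2
    rw [pow_succ, ← mul_assoc, ← mul_pow, one_add_X_mul_mk_one]
    simp
  · obtain ⟨k, rfl⟩ : ∃ k, s = j + (k + 1) := ⟨s - j - 1, by omega⟩
    rw [show j + (k + 1) + 1 = j + (k + 1 + 1) by ring, pow_add _ j, ← mul_assoc, ← mul_pow,
      one_add_X_mul_mk_one, one_pow, one_mul, mk_one_pow_eq_mk_choose_add, coeff_mk,
      Nat.add_sub_cancel_left, ← two_mul]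
    have := Nat.two_dvd_centralBinom_succ k
    rw [Nat.centralBinom] at this
    exact natCast_even (Nat.mod_eq_zero_of_dvd this)
  · omega
  · rfl

/-- The same extraction applied to the right side produces the binomial coefficients of the Adem
relations. -/
lemma coeff_residue_right {s n i : ℕ} (hn : 3 * s < n) (hi : 2 * i < n) :
    coeff s (X ^ (n - 2 * i) * (1 + X : 𝔹) ^ i * mk 1 ^ (s + 1)) =
      if n ≤ 2 * i + s then (Nat.choose (i - s - 1) (2 * i + s - n) : ZMod 2) else 0 := by
  rw [mul_assoc, coeff_X_pow_mul']
  split_ifs with h1 h2 h2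
  · obtain ⟨k, rfl⟩ : ∃ k, i = s + 1 + k := ⟨i - (s + 1), by omega⟩
    rw [pow_add, mul_right_comm, ← mul_pow, one_add_X_mul_mk_one, one_pow, one_mul,
      show (1 + X : 𝔹) = ((1 + Polynomial.X : Polynomial (ZMod 2)) : 𝔹) by simp,
      ← Polynomial.coe_pow, Polynomial.coeff_coe, Polynomial.coeff_one_add_X_pow]
    congr 2 <;> omega
  · omega
  · omega
  · rfl

/-- The functional equation implies the Adem constraints: in degree `n = r + s`, the coefficient
`ε s * E ε (s + 1) r` is the residue of the left side against `(1 + β) ^ (-s - 1)`. -/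
theorem adem_of_funEq {ε : ℕ → ZMod 2} (h0 : ε 0 = 0) (h1 : ε 1 = 1) (h : FunEq ε) :
    AdemConstraints ε := by
  refine ⟨h0, h1, fun s r hr => ?_⟩
  have hc := congrArg (fun F => coeff s (F * mk 1 ^ (s + 1))) (h.coeff_eq h0 (r + s))
  simp only [Finset.sum_mul, map_sum, mul_assoc, coeff_C_mul] at hc
  simp only [coeff_residue_left] at hc
  rw [Finset.sum_eq_single_of_mem s (by simp) (by intro j _ hj; simp [hj]), if_pos rfl,
    mul_one, Nat.add_sub_cancel] at hc
  rw [hc]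
  apply Finset.sum_congr_of_eq_on_inter
  · intro i hi hi'
    simp only [Finset.mem_filter, Finset.mem_Icc, Finset.mem_range] at hi hi'
    by_cases hin : 2 * i < r + s
    · rw [← mul_assoc (X ^ _), coeff_residue_right (by omega) hin]
      split_ifs with hle
      · rw [Nat.choose_eq_zero_of_lt (by omega)]
        simp
      · ring
    · rw [E_of_lt h0 (by omega)]
      ring
  · intro i hi hi'
    simp only [Finset.mem_filter, Finset.mem_Icc, Finset.mem_range] at hi hi'
    omega
  · intro i hi hi'
    simp only [Finset.mem_filter, Finset.mem_Icc, Finset.mem_range] at hi hi'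
    by_cases hin : 2 * i < r + s
    · rw [← mul_assoc (X ^ _), coeff_residue_right (by omega) hin, if_pos (by omega),
        show 2 * i + s - (r + s) = 2 * i - r by omega]
      ring
    · rw [E_of_lt h0 (by omega)]
      ring

lemma bvar_ne_zero : bvar ≠ 0 := by
  rw [bvar, Ne, map_eq_zero_iff _ C_injective]
  exact X_ne_zero

lemma one_add_bvar_ne_zero : 1 + bvar ≠ 0 := by
  intro h
  have := congrArg (fun F : 𝕊 => constantCoeff (constantCoeff F)) h
  simp [bvar] at this

lemma ne_zero_of_constantCoeff_eq_one {D : 𝕊} (h : constantCoeff D = 1) : D ≠ 0 := by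
  rintro rfl
  simp at h

lemma rescale_X_eq : rescale (X : 𝔹) (X : 𝕊) = bvar * X := by
  rw [rescale_X, bvar]

lemma funEq_one {ε : ℕ → ZMod 2} (h0 : ε 0 = 0) (hf : mk ε = X) : FunEq ε := by
  have hp : fz ε = X := by rw [fz, hf, map_X]
  have hq : fbz ε = bvar * X := by rw [fbz, hp, rescale_X_eq]
  have hW := bvar_mul_argQ h0
  rw [hq] at hW
  rw [FunEq, hp, comp_X (X_dvd_argP ε), comp_X (X_dvd_argQ ε), hq, argP, hp]
  linear_combination -X * hW

lemma funEq_two {ε : ℕ → ZMod 2} (h0 : ε 0 = 0) (hf : mk ε = X + X * mk ε) : FunEq ε := by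
  have hp : fz ε = X + X * fz ε := by
    conv_lhs => rw [fz, hf, map_add, map_mul, map_X, ← fz]
  have hq : fbz ε = bvar * X + bvar * X * fbz ε := by
    conv_lhs => rw [fbz, hp, map_add, map_mul, rescale_X_eq, ← fbz]
  have hcomp : ∀ a : 𝕊, X ∣ a → comp (fz ε) a = a + a * comp (fz ε) a := by
    intro a ha
    conv_lhs => rw [hp, comp_add ha, comp_mul ha, comp_X ha]
  have key := alg_two hp hq (argP.eq_1 ε) (bvar_mul_argQ h0) (hcomp _ (X_dvd_argP ε))
    (hcomp _ (X_dvd_argQ ε))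
  refine sub_eq_zero.1 ((mul_eq_zero.1 key).resolve_left (mul_ne_zero bvar_ne_zero ?_))
  exact ne_zero_of_constantCoeff_eq_one (by simp)

lemma funEq_four {ε : ℕ → ZMod 2} (h0 : ε 0 = 0) (hf : mk ε = X + X ^ 2 * mk ε) : FunEq ε := by
  have hp : fz ε = X + X ^ 2 * fz ε := by
    conv_lhs => rw [fz, hf, map_add, map_mul, map_pow, map_X, ← fz]
  have hq : fbz ε = bvar * X + (bvar * X) ^ 2 * fbz ε := by
    conv_lhs => rw [fbz, hp, map_add, map_mul, map_pow, rescale_X_eq, ← fbz]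
  have hcomp : ∀ a : 𝕊, X ∣ a → comp (fz ε) a = a + a ^ 2 * comp (fz ε) a := by
    intro a ha
    conv_lhs => rw [hp, comp_add ha, comp_mul ha, comp_pow ha, comp_X ha]
  have key := alg_four hp hq (argP.eq_1 ε) (bvar_mul_argQ h0) (hcomp _ (X_dvd_argP ε))
    (hcomp _ (X_dvd_argQ ε))
  refine sub_eq_zero.1 ((mul_eq_zero.1 key).resolve_left
    (mul_ne_zero (pow_ne_zero 2 bvar_ne_zero) ?_))
  exact ne_zero_of_constantCoeff_eq_one (by simp)

/-- An equation `d = X * c * d ^ 2` has only the solution `d = 0`. -/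
lemma eq_zero_of_eq_mul_sq {c d : 𝕊} (h : d = X * c * d ^ 2) : d = 0 := by
  have h' : (1 - X * c * d) * d = 0 := by linear_combination h
  exact (mul_eq_zero.1 h').resolve_left (ne_zero_of_constantCoeff_eq_one (by simp))

lemma funEq_three {ε : ℕ → ZMod 2} (h0 : ε 0 = 0) (hf : mk ε = X + X * mk ε ^ 2) : FunEq ε := by
  have hp : fz ε = X + X * fz ε ^ 2 := by
    conv_lhs => rw [fz, hf, map_add, map_mul, map_pow, map_X, ← fz]
  have hq : fbz ε = bvar * X + bvar * X * fbz ε ^ 2 := by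
    conv_lhs => rw [fbz, hp, map_add, map_mul, map_pow, rescale_X_eq, ← fbz]
  have hcomp : ∀ a : 𝕊, X ∣ a → comp (fz ε) a = a + a * comp (fz ε) a ^ 2 := by
    intro a ha
    conv_lhs => rw [hp, comp_add ha, comp_mul ha, comp_pow ha, comp_X ha]
  have hrel : bvar * fz ε * (1 + fbz ε ^ 2) = fbz ε * (1 + fz ε ^ 2) := by
    apply mul_left_cancel₀ (X_ne_zero (R := 𝔹))
    linear_combination fbz ε * hp - fz ε * hq
  have hP := alg_three_P hp hq (argP.eq_1 ε) (hcomp _ (X_dvd_argP ε)) hrel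
  have hQ := alg_three_Q hp hq (bvar_mul_argQ h0) (hcomp _ (X_dvd_argQ ε)) hrel
  have hP' := eq_zero_of_eq_mul_sq (c := bvar * fz ε) (hP.trans (by ring))
  have hQ' : (1 + bvar) * comp (fz ε) (argQ ε) + fz ε * (fz ε + bvar * fbz ε) = 0 := by
    apply eq_zero_of_eq_mul_sq (c := X * rescale (X : 𝔹) (gz ε))
    apply mul_left_cancel₀ bvar_ne_zero
    refine hQ.trans ?_
    nth_rewrite 1 [fbz_eq h0]
    ring
  apply mul_left_cancel₀ one_add_bvar_ne_zero
  linear_combination fz ε * hP' - fbz ε * hQ'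

end Symmetry

/-! ### The four solutions -/

lemma eq_ite {ε : ℕ → ZMod 2} {p : ℕ → Prop} [DecidablePred p] (h : ∀ r, ε r = 1 ↔ p r) (r : ℕ) :
    ε r = if p r then 1 else 0 := by
  split_ifs with hr
  · exact (h r).2 hr
  · exact (zmod_two_cases (ε r)).resolve_right fun h1 => hr ((h r).1 h1)

lemma adem_one {ε : ℕ → ZMod 2} (h : ∀ r, ε r = 1 ↔ r = 1) : AdemConstraints ε := by
  have h0 : ε 0 = 0 := by simp [eq_ite h]
  refine adem_of_funEq h0 ((h 1).2 rfl) (funEq_one h0 ?_)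
  ext n
  simp [eq_ite h, coeff_X]

lemma adem_two {ε : ℕ → ZMod 2} (h : ∀ r, ε r = 1 ↔ 1 ≤ r) : AdemConstraints ε := by
  have h0 : ε 0 = 0 := by simp [eq_ite h]
  refine adem_of_funEq h0 ((h 1).2 le_rfl) (funEq_two h0 ?_)
  ext n
  rcases n with _ | _ | n <;> simp [eq_ite h, coeff_X, coeff_succ_X_mul]

lemma adem_four {ε : ℕ → ZMod 2} (h : ∀ r, ε r = 1 ↔ Odd r) : AdemConstraints ε := by
  have h0 : ε 0 = 0 := by simp [eq_ite h]
  refine adem_of_funEq h0 ((h 1).2 odd_one) (funEq_four h0 ?_)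
  ext n
  rcases n with _ | _ | n <;> simp [eq_ite h, coeff_X, coeff_X_pow_mul', parity_simps]

lemma mersenne_double (r : ℕ) (hr : 1 ≤ r) :
    (∃ k, 1 ≤ k ∧ 2 * r + 1 = 2 ^ k - 1) ↔ ∃ k, 1 ≤ k ∧ r = 2 ^ k - 1 := by
  constructor
  · rintro ⟨k, hk, h⟩
    obtain ⟨j, rfl⟩ : ∃ j, k = j + 1 := ⟨k - 1, by omega⟩
    rw [pow_succ] at h
    refine ⟨j, ?_, by omega⟩
    rcases j with _ | j
    · simp at h; omega
    · omega
  · rintro ⟨k, hk, h⟩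
    have := Nat.one_le_two_pow (n := k)
    exact ⟨k + 1, by omega, by rw [pow_succ]; omega⟩

lemma not_mersenne_even (r : ℕ) : ¬ ∃ k, 1 ≤ k ∧ 2 * r = 2 ^ k - 1 := by
  rintro ⟨k, hk, h⟩
  obtain ⟨j, rfl⟩ : ∃ j, k = j + 1 := ⟨k - 1, by omega⟩
  have := Nat.one_le_two_pow (n := j)
  rw [pow_succ] at h
  omega

open Classical in
lemma adem_three {ε : ℕ → ZMod 2} (h : ∀ r, ε r = 1 ↔ ∃ k, 1 ≤ k ∧ r = 2 ^ k - 1) :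
    AdemConstraints ε := by
  have heven : ∀ r, ε (2 * r) = 0 := fun r => by rw [eq_ite h, if_neg (not_mersenne_even r)]
  have h0 : ε 0 = 0 := heven 0
  have h1 : ε 1 = 1 := (h 1).2 ⟨1, le_rfl, rfl⟩
  refine adem_of_funEq h0 h1 (funEq_three h0 ?_)
  rw [sq_eq_expand]
  ext n
  obtain ⟨r, rfl | rfl⟩ := n.even_or_odd'
  · rcases r with _ | r
    · simp [h0]
    · rw [coeff_mk, heven, map_add, coeff_X, if_neg (by omega),
        show 2 * (r + 1) = 2 * r + 1 + 1 by ring, coeff_succ_X_mul,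
        coeff_expand_of_not_dvd _ _ _ (by omega), add_zero]
  · rw [coeff_mk, map_add, coeff_succ_X_mul, coeff_expand_mul, coeff_X, coeff_mk]
    rcases r with _ | r
    · simp [h0, h1]
    · rw [if_neg (by omega), zero_add, eq_ite h, eq_ite h, mersenne_double _ (by omega)]

theorem stmt_0 (ε : ℕ → ZMod 2) :
    AdemConstraints ε ↔
      ((∀ r, ε r = 1 ↔ r = 1) ∨
       (∀ r, ε r = 1 ↔ 1 ≤ r) ∨
       (∀ r, ε r = 1 ↔ ∃ k, 1 ≤ k ∧ r = 2 ^ k - 1) ∨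
       (∀ r, ε r = 1 ↔ Odd r)) := by
  classical
  constructor
  · intro h
    -- Each candidate is compared with the indicator function of its support.
    have hind : ∀ p : ℕ → Prop, ∀ r, (fun r => if p r then (1 : ZMod 2) else 0) r = 1 ↔ p r := by
      intro p r
      by_cases hr : p r <;> simp [hr]
    rcases zmod_two_cases (ε 2) with h2 | h2
    · rcases zmod_two_cases (ε 3) with h3 | h3
      · refine Or.inl fun r => ⟨fun hr => ?_, fun hr => hr ▸ h.2.1⟩
        by_contra hne
        rcases Nat.eq_zero_or_pos r with rfl | hpos
        · simp [h.1] at hr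
        · simp [eq_zero_of_three h h2 h3 r (by omega)] at hr
      · rcases zmod_two_cases (ε 5) with h5 | h5
        · refine Or.inr (Or.inr (Or.inl fun r => ?_))
          have hd := hind fun r => ∃ k, 1 ≤ k ∧ r = 2 ^ k - 1
          have hd3 := (hd 3).2 ⟨2, by norm_num, rfl⟩
          have hn2 : ¬ ∃ k, 1 ≤ k ∧ 2 = 2 ^ k - 1 := not_mersenne_even 1
          have hn5 : ¬ ∃ k, 1 ≤ k ∧ 5 = 2 ^ k - 1 :=
            fun h5 => not_mersenne_even 1 ((mersenne_double 2 (by norm_num)).1 h5)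
          rw [unique_of_three h (adem_three hd) h2 (if_neg hn2) h3 hd3
            (h5.trans (if_neg hn5).symm) r]
          exact hd r
        · refine Or.inr (Or.inr (Or.inr fun r => ?_))
          have hd := hind fun r => Odd r
          rw [unique_of_three h (adem_four hd) h2 (if_neg (by decide)) h3 (if_pos (by decide))
            (h5.trans (if_pos (by decide)).symm) r]
          exact hd r
    · refine Or.inr (Or.inl fun r => ?_)
      have hd := hind fun r => 1 ≤ r
      rw [unique_of_two h (adem_two hd) h2 (if_pos (by norm_num)) r]
      exact hd r
  · rintro (h | h | h | h)
    · exact adem_one h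
    · exact adem_two h
    · exact adem_three h
    · exact adem_four h
end

section
/- Let ε : ℕ → ZMod 2 satisfy the Adem constraints with ε(2) = 0 and ε(3) = 1. Then ε takes the same value at all odd natural numbers that are not of the form 2^k − 1: for all odd x, y such that x + 1 and y + 1 are not powers of 2, one has ε(x) = ε(y). -/
namespace Adem

open Finset PowerSeries

/-! ### `E ε s d` as a coefficient of a power series -/

theorem E_eq_coeff (ε : ℕ → ZMod 2) (s d : ℕ) : E ε s d = coeff d ((PowerSeries.mk ε) ^ s) := by
  have h : (PowerSeries.mk ε) ^ s = ∏ _j : Fin s, PowerSeries.mk ε := by simp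
  rw [h, coeff_prod, E]
  symm
  refine sum_bij (fun l _ => ⇑l) ?_ ?_ ?_ ?_
  · intro l hl
    simpa [Finset.Nat.mem_antidiagonalTuple] using hl
  · intro a _ b _ hab
    exact DFunLike.coe_injective hab
  · intro f hf
    refine ⟨Finsupp.equivFunOnFinite.symm f, ?_, by simp⟩
    simpa [Finset.Nat.mem_antidiagonalTuple] using hf
  · intro l _
    simp

/-- The Frobenius identity `f(x)² = f(x²)` over `F₂`. -/
theorem sq_eq_expand (f : PowerSeries (ZMod 2)) : f ^ 2 = expand 2 two_ne_zero f := by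
  have h := MvPowerSeries.map_frobenius_expand (R := ZMod 2) 2 two_ne_zero (f := f)
  rw [ZMod.frobenius_zmod] at h
  exact h.symm.trans (by simp [PowerSeries.expand])

theorem E_two_mul (ε : ℕ → ZMod 2) (k d : ℕ) : E ε (2 * k) (2 * d) = E ε k d := by
  rw [E_eq_coeff, E_eq_coeff, pow_mul, sq_eq_expand, ← map_pow, coeff_expand_mul]

theorem E_one (ε : ℕ → ZMod 2) (d : ℕ) : E ε 1 d = ε d := by
  simp [E_eq_coeff]

/-! ### Low degrees of the powers of `e` -/

theorem mk_eq_X_mul {ε : ℕ → ZMod 2} (h0 : ε 0 = 0) :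
    PowerSeries.mk ε = X * PowerSeries.mk fun n => ε (n + 1) := by
  ext n
  cases n with
  | zero => simp [h0]
  | succ n => simp [coeff_succ_X_mul]

/-- Since `x` divides `e`, `E ε s (d + s)` is the coefficient of `x^d` in `(e / x)^s`. -/
theorem E_add {ε : ℕ → ZMod 2} (h0 : ε 0 = 0) (s d : ℕ) :
    E ε s (d + s) = coeff d ((PowerSeries.mk fun n => ε (n + 1)) ^ s) := by
  rw [E_eq_coeff, mk_eq_X_mul h0, mul_pow, coeff_X_pow_mul]

theorem E_lt {ε : ℕ → ZMod 2} (h0 : ε 0 = 0) {s d : ℕ} (hd : d < s) : E ε s d = 0 := by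
  rw [E_eq_coeff, mk_eq_X_mul h0, mul_pow, coeff_X_pow_mul', if_neg (by omega)]

theorem E_self {ε : ℕ → ZMod 2} (h0 : ε 0 = 0) (h1 : ε 1 = 1) (s : ℕ) : E ε s s = 1 := by
  have h := E_add h0 s 0
  rw [zero_add] at h
  simp [h, h1]

theorem E_add_two {ε : ℕ → ZMod 2} (h0 : ε 0 = 0) (h1 : ε 1 = 1) (h2 : ε 2 = 0) (s : ℕ) :
    E ε s (s + 2) = s * ε 3 := by
  rw [add_comm, E_add h0]
  induction s with
  | zero => simp [coeff_one]
  | succ s ih =>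
    rw [pow_succ, coeff_mul, show antidiagonal 2 = {(0, 2), (1, 1), (2, 0)} from rfl]
    simp [ih, h1, h2]
    ring

/-! ### Consequences of the Adem constraints -/

/-- The right-hand side of an Adem constraint may be summed over any set `T` of admissible indices
that contains all `i` with `r ≤ 2 * i < r + s`: the factor `E ε (i + 1) (r + s - i)` vanishes for
larger `i`. -/
theorem window {ε : ℕ → ZMod 2} (hε : AdemConstraints ε) (s r : ℕ) (hr : r > 2 * s) (T : Finset ℕ)
    (hT : ∀ i ∈ T, s + 1 ≤ i ∧ i ≤ r - s - 1 ∧ r ≤ 2 * i)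
    (hT' : ∀ i, r ≤ 2 * i → 2 * i < r + s → i ∈ T) :
    ε s * E ε (s + 1) r =
      ∑ i ∈ T, (Nat.choose (i - s - 1) (2 * i - r) : ZMod 2) * ε i * E ε (i + 1) (r + s - i) := by
  rw [hε.2.2 s r hr]
  symm
  refine sum_subset ?_ ?_
  · intro i hi
    have := hT i hi
    simp only [mem_filter, mem_Icc]
    omega
  · intro i hi hiT
    simp only [mem_filter, mem_Icc] at hi
    have h : ¬ 2 * i < r + s := fun h => hiT (hT' i hi.2 h)
    rw [E_lt hε.1 (by omega), mul_zero]

/-- Lucas' theorem at the prime `2` for an even lower index. -/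
theorem choose_two_mul (n b : ℕ) :
    (Nat.choose n (2 * b) : ZMod 2) = (Nat.choose (n / 2) b : ZMod 2) := by
  have h := Choose.choose_modEq_choose_mod_mul_choose_div_nat (p := 2) (n := n) (k := 2 * b)
  rw [Nat.mul_mod_right, Nat.choose_zero_right, one_mul, Nat.mul_div_cancel_left _ two_pos] at h
  exact (ZMod.natCast_eq_natCast_iff _ _ _).2 h

theorem even_eq_zero {ε : ℕ → ZMod 2} (hε : AdemConstraints ε) (h2 : ε 2 = 0) (k : ℕ) :
    ε (2 * k) = 0 := by
  obtain hk | hk | hk : k = 0 ∨ k = 1 ∨ 2 ≤ k := by omega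
  · simpa [hk] using hε.1
  · simpa [hk] using h2
  · have h := window hε 2 (4 * k - 1) (by omega) {2 * k}
      (by simp only [mem_singleton]; omega) (by simp only [mem_singleton]; omega)
    rw [h2, zero_mul, sum_singleton, show 2 * (2 * k) - (4 * k - 1) = 1 by omega,
      show 4 * k - 1 + 2 - 2 * k = 2 * k + 1 by omega, E_self hε.1 hε.2.1, Nat.choose_one_right,
      show 2 * k - 2 - 1 = 2 * (k - 2) + 1 by omega] at h
    simpa [CharTwo.two_eq_zero] using h.symm

theorem four_mul_add_three {ε : ℕ → ZMod 2} (hε : AdemConstraints ε) (h2 : ε 2 = 0) (h3 : ε 3 = 1)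
    (n : ℕ) : ε (4 * n + 3) = ε (2 * n + 1) := by
  rcases Nat.eq_zero_or_pos n with rfl | hn
  · simpa [hε.2.1] using h3
  have h := window hε 3 (8 * n + 4) (by omega) {2 * (2 * n + 1), 4 * n + 3}
    (by simp only [mem_insert, mem_singleton]; omega)
    (by simp only [mem_insert, mem_singleton]; omega)
  rw [sum_pair (by omega), even_eq_zero hε h2, mul_zero, zero_mul, zero_add, h3, one_mul,
    show 8 * n + 4 + 3 - (4 * n + 3) = 4 * n + 3 + 1 by omega, E_self hε.1 hε.2.1,
    show 2 * (4 * n + 3) - (8 * n + 4) = 2 * 1 by omega, choose_two_mul, Nat.choose_one_right,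
    show (4 * n + 3 - 3 - 1) / 2 = 2 * (n - 1) + 1 by omega,
    show 3 + 1 = 2 * (2 * 1) by norm_num, show 8 * n + 4 = 2 * (2 * (2 * n + 1)) by ring,
    E_two_mul, E_two_mul, E_one] at h
  simpa [CharTwo.two_eq_zero] using h.symm

/-- In `e³ = e(x²) e(x)`, a nonzero contribution to the degree `4N + 1` is
`ε(a) ε(2b + 1) = ε(a) ε(b)` with `a + b = 2N` and `a`, `b` odd; these sum to the coefficient of
`x^(2N)` in `e²`. -/
theorem E_three {ε : ℕ → ZMod 2} (hε : AdemConstraints ε) (h2 : ε 2 = 0) (h3 : ε 3 = 1)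
    (N : ℕ) : E ε 3 (4 * N + 1) = ε N := by
  have hE : ε N = E ε (2 * 1) (2 * N) := by rw [E_two_mul, E_one]
  have hsq : coeff (2 * N) (PowerSeries.mk ε ^ 2) = ∑ ab ∈ antidiagonal (2 * N),
      coeff ab.1 (PowerSeries.mk ε) * coeff ab.2 (PowerSeries.mk ε) := by
    rw [sq, coeff_mul]
  rw [hE, E_eq_coeff, E_eq_coeff, mul_one, hsq, pow_succ, coeff_mul, sq_eq_expand]
  symm
  refine sum_of_injOn (fun ab => (2 * ab.1, 2 * ab.2 + 1)) ?_ ?_ ?_ ?_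
  · rintro ⟨a, b⟩ _ ⟨c, d⟩ _ h
    simp only [Prod.mk.injEq] at h ⊢
    omega
  · rintro ⟨a, b⟩ h
    simp only [mem_coe, HasAntidiagonal.mem_antidiagonal] at h ⊢
    omega
  · rintro ⟨a, b⟩ h h'
    simp only [HasAntidiagonal.mem_antidiagonal] at h
    rw [coeff_expand_of_not_dvd, zero_mul]
    rintro ⟨c, rfl⟩
    refine h' ⟨(c, 2 * N - c), ?_, ?_⟩
    · simp only [mem_coe, HasAntidiagonal.mem_antidiagonal]
      omega
    · simp only [Prod.mk.injEq, true_and]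
      omega
  · rintro ⟨a, b⟩ h
    simp only [HasAntidiagonal.mem_antidiagonal] at h
    simp only [coeff_expand_mul, coeff_mk]
    rcases Nat.even_or_odd' a with ⟨c, rfl | rfl⟩
    · simp [even_eq_zero hε h2]
    · obtain ⟨d, rfl⟩ : ∃ d, b = 2 * d + 1 := ⟨b / 2, by omega⟩
      rw [show 2 * (2 * d + 1) + 1 = 4 * d + 3 by ring, four_mul_add_three hε h2 h3]

/-- The constraint with `s = 5` and `r = 8n + 10`: by `E_three` the left-hand side is
`ε(5) ε(n+1)`, and on the right only `i = 4n + 5` and `i = 4n + 7` contribute. -/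
theorem adem_five {ε : ℕ → ZMod 2} (hε : AdemConstraints ε) (h2 : ε 2 = 0) (h3 : ε 3 = 1)
    (n : ℕ) (hn : 1 ≤ n) :
    ε 5 * ε (n + 1) = ε (4 * n + 5) + (n : ZMod 2) * ε (4 * n + 7) := by
  have h := window hε 5 (8 * n + 10) (by omega) {4 * n + 5, 2 * (2 * n + 3), 4 * n + 7}
    (by simp only [mem_insert, mem_singleton]; omega)
    (by simp only [mem_insert, mem_singleton]; omega)
  rw [sum_insert (by simp only [mem_insert, mem_singleton]; omega), sum_pair (by omega),
    even_eq_zero hε h2, mul_zero, zero_mul, zero_add,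
    show 8 * n + 10 + 5 - (4 * n + 7) = 4 * n + 7 + 1 by omega, E_self hε.1 hε.2.1,
    show 2 * (4 * n + 7) - (8 * n + 10) = 2 * (2 * 1) by omega, choose_two_mul, choose_two_mul,
    Nat.choose_one_right, show (4 * n + 7 - 5 - 1) / 2 / 2 = n by omega,
    show 2 * (4 * n + 5) - (8 * n + 10) = 0 by omega, Nat.choose_zero_right,
    show 8 * n + 10 + 5 - (4 * n + 5) = 2 * (2 * n + 3 + 2) by omega,
    show 4 * n + 5 + 1 = 2 * (2 * n + 3) by ring, E_two_mul, E_add_two hε.1 hε.2.1 h2, h3,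
    show 5 + 1 = 2 * 3 by norm_num, show 8 * n + 10 = 2 * (4 * (n + 1) + 1) by ring,
    E_two_mul, E_three hε h2 h3] at h
  rw [h]
  have h' : ((2 * n + 3 : ℕ) : ZMod 2) = 1 := by
    rw [show 2 * n + 3 = 2 * (n + 1) + 1 by ring]
    simp [CharTwo.two_eq_zero]
  rw [h']
  simp

theorem eight_mul_add_five {ε : ℕ → ZMod 2} (hε : AdemConstraints ε) (h2 : ε 2 = 0) (h3 : ε 3 = 1)
    (p : ℕ) : ε (8 * p + 5) = ε 5 * ε (2 * p + 1) := by
  rcases Nat.eq_zero_or_pos p with rfl | hp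
  · simp [hε.2.1]
  have h := adem_five hε h2 h3 (2 * p) (by omega)
  rw [show 4 * (2 * p) + 5 = 8 * p + 5 by ring] at h
  simpa [CharTwo.two_eq_zero] using h.symm

theorem eight_mul_add_one {ε : ℕ → ZMod 2} (hε : AdemConstraints ε) (h2 : ε 2 = 0) (h3 : ε 3 = 1)
    (q : ℕ) (hq : 1 ≤ q) : ε (8 * q + 1) = ε (4 * q + 1) := by
  obtain ⟨q, rfl⟩ := Nat.exists_eq_add_of_le' hq
  have h := adem_five hε h2 h3 (2 * q + 1) (by omega)
  rw [show 2 * q + 1 + 1 = 2 * (q + 1) by ring, even_eq_zero hε h2, mul_zero,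
    show 4 * (2 * q + 1) + 5 = 8 * (q + 1) + 1 by ring,
    show 4 * (2 * q + 1) + 7 = 4 * (2 * (q + 1)) + 3 by ring, four_mul_add_three hε h2 h3,
    show 2 * (2 * (q + 1)) + 1 = 4 * (q + 1) + 1 by ring] at h
  simp only [Nat.cast_add, Nat.cast_mul, Nat.cast_ofNat, CharTwo.two_eq_zero, zero_mul, zero_add,
    Nat.cast_one, one_mul] at h
  exact CharTwo.add_eq_zero.1 h.symm

theorem two_pow_sub_one {ε : ℕ → ZMod 2} (hε : AdemConstraints ε) (h2 : ε 2 = 0) (h3 : ε 3 = 1)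
    (k : ℕ) : ε (2 * (2 ^ k - 1) + 1) = 1 := by
  induction k with
  | zero => simpa using hε.2.1
  | succ k ih =>
    have := Nat.one_le_two_pow (n := k)
    have h : 2 * (2 ^ (k + 1) - 1) + 1 = 4 * (2 ^ k - 1) + 3 := by
      rw [pow_succ]
      omega
    rw [h, four_mul_add_three hε h2 h3, ih]

theorem eq_five {ε : ℕ → ZMod 2} (hε : AdemConstraints ε) (h2 : ε 2 = 0) (h3 : ε 3 = 1)
    (x : ℕ) (hx : Odd x) (hp : ¬ ∃ k : ℕ, x + 1 = 2 ^ k) : ε x = ε 5 := by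
  induction x using Nat.strong_induction_on with
  | _ x ih =>
    obtain ⟨n, rfl | rfl | rfl⟩ :
        ∃ n, x = 4 * n + 3 ∨ x = 8 * n + 5 ∨ x = 8 * n + 1 := by
      obtain ⟨m, rfl⟩ := hx
      obtain h | h | h : m % 2 = 1 ∨ m % 4 = 2 ∨ m % 4 = 0 := by omega
      · exact ⟨m / 2, by omega⟩
      · exact ⟨m / 4, by omega⟩
      · exact ⟨m / 4, by omega⟩
    · rw [four_mul_add_three hε h2 h3]
      refine ih _ (by omega) (by simp) ?_
      rintro ⟨k, hk⟩
      exact hp ⟨k + 1, by rw [pow_succ, ← hk]; ring⟩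
    · rw [eight_mul_add_five hε h2 h3]
      by_cases hn : ∃ k : ℕ, 2 * n + 1 + 1 = 2 ^ k
      · obtain ⟨k, hk⟩ := hn
        cases k with
        | zero => simp at hk
        | succ k =>
          have h := two_pow_sub_one hε h2 h3 k
          rw [show 2 * (2 ^ k - 1) + 1 = 2 * n + 1 by rw [pow_succ] at hk; omega] at h
          rw [h, mul_one]
      · rw [ih _ (by omega) (by simp) hn]
        -- what remains is `c * c = c` in the field with two elements
        generalize ε 5 = c
        revert c
        decide
    · have hn : n ≠ 0 := by
        rintro rfl
        exact hp ⟨1, by norm_num⟩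
      rw [eight_mul_add_one hε h2 h3 n (by omega)]
      refine ih _ (by omega) ⟨2 * n, by ring⟩ ?_
      -- `4n + 2 > 2` is twice an odd number
      rintro ⟨k, hk⟩
      obtain _ | _ | k := k
      · simp at hk
      · omega
      · rw [pow_succ, pow_succ] at hk
        omega

end Adem

theorem stmt_6 (ε : ℕ → ZMod 2) (hε : AdemConstraints ε) (h2 : ε 2 = 0)
    (h3 : ε 3 = 1) :
    ∀ x y : ℕ, Odd x → Odd y → (¬ ∃ k : ℕ, x + 1 = 2 ^ k) →
      (¬ ∃ k : ℕ, y + 1 = 2 ^ k) → ε x = ε y := by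
  intro x y hx hy hx' hy'
  rw [Adem.eq_five hε h2 h3 x hx hx', Adem.eq_five hε h2 h3 y hy hy']
end

section
/- For all natural numbers n ≥ 0 and q ≥ 1, the congruence Σ_{k=0}^{n} C(k, n−k) · C(n+3q, 2k+2q+1) ≡ C(n+3q, 2q−1) holds modulo 2, where C(a,b) denotes the binomial coefficient. -/
/-!
If `n + 3q` is even, every binomial coefficient `C(n+3q, odd)` is even and both sides vanish.
Otherwise write `n + 3q = 2M + 1` and `q = p + 1`; by Lucas the claim becomes
`∑ k ≤ n, C(k, n-k) C(M, k+q) ≡ C(M, p)`. Both sides are the coefficient of `X ^ p` in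
`(1 + X + X²) ^ M / (1 + X) ^ q` over `ZMod 2`:

* expanding `1 + X + X² = (1 + X) + X²` gives the left-hand side (`coeff_expand_left`);
* expanding `1 + X + X² = X (1 + X) + 1` gives terms `C(M, j) X ^ j (1 + X) ^ (j - q)`, whose
  coefficient for `j < p` is a multiple of the central binomial coefficient `C(2(p-j), p-j)`,
  hence even, so that only `j = p` survives (`coeff_expand_right`).
-/

open PowerSeries in
lemma one_add_X_mul_geom :
    (1 + X : PowerSeries (ZMod 2)) * PowerSeries.mk 1 = 1 := by
  have h := PowerSeries.mk_one_mul_one_sub_eq_one (ZMod 2)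
  have hneg : (1 - X : PowerSeries (ZMod 2)) = 1 + X := by
    ext m
    rw [map_sub, map_add, CharTwo.sub_eq_add]
  rwa [hneg, mul_comm] at h

open PowerSeries in
lemma one_add_X_pow_mul_geom_pow (a b : ℕ) :
    (1 + X : PowerSeries (ZMod 2)) ^ a * PowerSeries.mk 1 ^ (a + b) = PowerSeries.mk 1 ^ b := by
  rw [pow_add, ← mul_assoc, ← mul_pow, one_add_X_mul_geom, one_pow, one_mul]

open PowerSeries in
lemma coeff_expand_right (M p : ℕ) :
    coeff p ((X * (1 + X) + 1 : PowerSeries (ZMod 2)) ^ M * PowerSeries.mk 1 ^ (p + 1)) =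
      (M.choose p : ZMod 2) := by
  have key : ∀ j, coeff p ((X * (1 + X) : PowerSeries (ZMod 2)) ^ j * PowerSeries.mk 1 ^ (p + 1)) =
      if j = p then 1 else 0 := by
    intro j
    rw [mul_pow, mul_assoc, coeff_X_pow_mul']
    by_cases hj : j ≤ p
    · obtain ⟨d, rfl⟩ := Nat.exists_eq_add_of_le hj
      rw [if_pos hj, add_assoc, one_add_X_pow_mul_geom_pow, mk_one_pow_eq_mk_choose_add, coeff_mk,
        Nat.add_sub_cancel_left]
      rcases Nat.eq_zero_or_pos d with rfl | hd
      · simp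
      · rw [if_neg (by omega), ZMod.natCast_eq_zero_iff, ← two_mul]
        exact Nat.two_dvd_centralBinom_of_one_le hd
    · rw [if_neg hj, if_neg (by omega)]
  rw [add_pow, Finset.sum_mul, map_sum]
  have : ∀ j ∈ Finset.range (M + 1),
      coeff p ((X * (1 + X) : PowerSeries (ZMod 2)) ^ j * 1 ^ (M - j) * (M.choose j : PowerSeries (ZMod 2)) *
        PowerSeries.mk 1 ^ (p + 1)) = if j = p then (M.choose p : ZMod 2) else 0 := by
    intro j _
    rw [one_pow, mul_one, mul_right_comm, ← map_natCast (C (R := ZMod 2)), coeff_mul_C, key]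
    split_ifs with h
    · rw [h, one_mul]
    · rw [zero_mul]
  rw [Finset.sum_congr rfl this, Finset.sum_ite_eq']
  split_ifs with h
  · rfl
  · rw [Nat.choose_eq_zero_of_lt (by simpa using h), Nat.cast_zero]

open PowerSeries in
lemma coeff_expand_left (M n p : ℕ) (hM : 2 * M = n + 3 * p + 2) :
    coeff p (((1 + X) + X ^ 2 : PowerSeries (ZMod 2)) ^ M * PowerSeries.mk 1 ^ (p + 1)) =
      ∑ k ∈ Finset.range (n + 1), ((k.choose (n - k) * M.choose (k + (p + 1)) : ℕ) : ZMod 2) := by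
  set g : ℕ → ZMod 2 := fun i => coeff p ((1 + X : PowerSeries (ZMod 2)) ^ i *
    (X ^ 2) ^ (M - i) * (M.choose i : PowerSeries (ZMod 2)) * PowerSeries.mk 1 ^ (p + 1)) with hg
  have g_eq : ∀ i, g i = (if 2 * (M - i) ≤ p then coeff (p - 2 * (M - i))
      ((1 + X : PowerSeries (ZMod 2)) ^ i * PowerSeries.mk 1 ^ (p + 1)) else 0) *
        (M.choose i : ZMod 2) := by
    intro i
    rw [← coeff_X_pow_mul', ← coeff_mul_C, map_natCast]
    exact congrArg (coeff p) (by ring)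
  have g_big : ∀ i, M < i → g i = 0 := by
    intro i hi
    rw [g_eq, Nat.choose_eq_zero_of_lt hi, Nat.cast_zero, mul_zero]
  have g_small : ∀ i, i < p + 1 → g i = 0 := by
    intro i hi
    rw [g_eq, if_neg (by omega), zero_mul]
  -- For `i = k + (p + 1) ≤ M` the exponent `p - 2 * (M - i)` is `2k - n`.
  have g_mid : ∀ k, k + (p + 1) ≤ M → g (k + (p + 1)) =
      (if n ≤ 2 * k then (k.choose (2 * k - n) : ZMod 2) else 0) *
        (M.choose (k + (p + 1)) : ZMod 2) := by
    intro k hk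
    rw [g_eq, pow_add, mul_assoc, ← mul_pow, one_add_X_mul_geom, one_pow, mul_one]
    congr 1
    by_cases h : n ≤ 2 * k
    · rw [if_pos h, if_pos (by omega), show p - 2 * (M - (k + (p + 1))) = 2 * k - n by omega]
      have := Polynomial.coeff_one_add_X_pow (ZMod 2) k (2 * k - n)
      rw [← this, ← Polynomial.coeff_coe]
      simp
    · rw [if_neg h, if_neg (by omega)]
  rw [add_pow, Finset.sum_mul, map_sum]
  change ∑ i ∈ Finset.range (M + 1), g i = _
  have hext : ∑ i ∈ Finset.range (M + 1), g i =
      ∑ i ∈ Finset.range ((p + 1) + ((n + 1) + M)), g i := by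
    apply Finset.sum_subset
    · intro i hi
      rw [Finset.mem_range] at *
      omega
    · intro i _ hi
      exact g_big i (by simpa using hi)
  rw [hext, Finset.sum_range_add, Finset.sum_eq_zero (fun i hi => g_small i (by simpa using hi)),
    zero_add, Finset.sum_range_add, add_eq_left.mpr]
  · apply Finset.sum_congr rfl
    intro k hk
    rw [Finset.mem_range] at hk
    rw [add_comm (p + 1) k]
    by_cases hkM : k + (p + 1) ≤ M
    · rw [g_mid k hkM, Nat.cast_mul]
      congr 1
      split_ifs with h
      · rw [← Nat.choose_symm (show n - k ≤ k by omega), show k - (n - k) = 2 * k - n by omega]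
      · rw [Nat.choose_eq_zero_of_lt (by omega), Nat.cast_zero]
    · rw [g_big _ (by omega), Nat.choose_eq_zero_of_lt (by omega : M < k + (p + 1)), mul_zero,
        Nat.cast_zero]
  · apply Finset.sum_eq_zero
    intro k _
    rw [add_comm (p + 1)]
    by_cases hkM : n + 1 + k + (p + 1) ≤ M
    · rw [g_mid _ hkM, Nat.choose_eq_zero_of_lt (by omega : n + 1 + k < 2 * (n + 1 + k) - n)]
      simp
    · exact g_big _ (by omega)

lemma choose_odd_odd_cast (M a : ℕ) :
    ((2 * M + 1).choose (2 * a + 1) : ZMod 2) = (M.choose a : ZMod 2) := by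
  have h := Choose.choose_modEq_choose_mod_mul_choose_div_nat (n := 2 * M + 1) (k := 2 * a + 1)
    (p := 2)
  rw [show (2 * M + 1) % 2 = 1 by omega, show (2 * a + 1) % 2 = 1 by omega,
    show (2 * M + 1) / 2 = M by omega, show (2 * a + 1) / 2 = a by omega, Nat.choose_self,
    one_mul] at h
  exact (ZMod.natCast_eq_natCast_iff _ _ _).mpr h

lemma choose_even_odd_cast (M a : ℕ) :
    ((2 * M).choose (2 * a + 1) : ZMod 2) = 0 := by
  have h := Choose.choose_modEq_choose_mod_mul_choose_div_nat (n := 2 * M) (k := 2 * a + 1)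
    (p := 2)
  rw [show (2 * M) % 2 = 0 by omega, show (2 * a + 1) % 2 = 1 by omega,
    Nat.choose_eq_zero_of_lt one_pos, zero_mul] at h
  simpa using (ZMod.natCast_eq_natCast_iff _ _ _).mpr h

theorem stmt_8 (n q : ℕ) (hq : 1 ≤ q) :
    (∑ k ∈ Finset.range (n + 1),
        Nat.choose k (n - k) * Nat.choose (n + 3 * q) (2 * k + 2 * q + 1)) ≡
      Nat.choose (n + 3 * q) (2 * q - 1) [MOD 2] := by
  obtain ⟨p, rfl⟩ := Nat.exists_eq_add_of_le' hq
  rw [← ZMod.natCast_eq_natCast_iff, Nat.cast_sum, show 2 * (p + 1) - 1 = 2 * p + 1 by omega]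
  have hidx : ∀ k, 2 * k + 2 * (p + 1) + 1 = 2 * (k + (p + 1)) + 1 := fun k => by ring
  simp only [Nat.cast_mul, hidx]
  rcases Nat.even_or_odd' (n + 3 * (p + 1)) with ⟨M, hM | hM⟩
  · simp only [hM, choose_even_odd_cast, mul_zero, Finset.sum_const_zero]
  · simp only [hM, choose_odd_odd_cast]
    rw [← coeff_expand_right]
    have h := coeff_expand_left M n p (by omega)
    simp only [Nat.cast_mul] at h
    rw [← h]
    congr 3
    ring
end

section
/- For every natural number q ≥ 0, the binomial coefficient C(3q+2, 2q+1) is even. -/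
/-!
By Lucas' theorem modulo `2`, if `q = 2r` then the top `6r + 2` is even and the bottom `4r + 1`
is odd, so the coefficient is even because `C(0, 1) = 0`. If `q = 2r + 1`, then `6r + 5` and
`4r + 3` are both odd, and removing their last binary digit leaves `C(3r + 2, 2r + 1)`, which is
the same claim for `r < q`; strong induction concludes.
-/

theorem stmt_9 (q : ℕ) : Even (Nat.choose (3 * q + 2) (2 * q + 1)) := by
  induction q using Nat.strong_induction_on with
  | _ q ih =>
    have lucas := Choose.choose_modEq_choose_mod_mul_choose_div_nat
      (n := 3 * q + 2) (k := 2 * q + 1) (p := 2)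
    rw [Nat.even_iff, lucas]
    rcases Nat.even_or_odd' q with ⟨r, rfl | rfl⟩
    · have h1 : (3 * (2 * r) + 2) % 2 = 0 := by omega
      have h2 : (2 * (2 * r) + 1) % 2 = 1 := by omega
      simp [h1, h2]
    · have h1 : (3 * (2 * r + 1) + 2) % 2 = 1 := by omega
      have h2 : (2 * (2 * r + 1) + 1) % 2 = 1 := by omega
      have h3 : (3 * (2 * r + 1) + 2) / 2 = 3 * r + 2 := by omega
      have h4 : (2 * (2 * r + 1) + 1) / 2 = 2 * r + 1 := by omega
      rw [h1, h2, h3, h4, Nat.choose_self, one_mul]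
      exact Nat.even_iff.mp (ih r (by omega))
end

section
/- For every natural number q ≥ 0, the binomial coefficient C(3q+5, 2q+3) is even. -/
theorem stmt_10 (q : ℕ) : Even (Nat.choose (3 * q + 5) (2 * q + 3)) := by
  -- By symmetry the coefficient is `C(3q+5, q+2)`, which equals `2 * C(3q+5, q+1)`:
  -- the ratio of these consecutive coefficients is `(2q+4)/(q+2) = 2`.
  have hsymm : Nat.choose (3 * q + 5) (2 * q + 3) = Nat.choose (3 * q + 5) (q + 1 + 1) :=
    Nat.choose_symm_of_eq_add (by omega)
  have hratio := Nat.choose_succ_right_eq (3 * q + 5) (q + 1)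
  have hsub : 3 * q + 5 - (q + 1) = 2 * (q + 1 + 1) := by omega
  rw [hsub, ← mul_assoc] at hratio
  rw [hsymm, Nat.eq_of_mul_eq_mul_right (Nat.succ_pos _) hratio]
  exact even_two.mul_left _
end

section
/- For every natural number q ≥ 1, the sum C(3q+2, 2q+5) + C(3q+2, 2q+3) + C(3q+2, 2q−1) is even. -/
/-!
Everything is read modulo 2 through Lucas' theorem: `C(2a+i, 2b+j) ≡ C(a, b) * C(i, j)` for binary
digits `i, j`. If `q` is even, all three terms have even top and odd bottom, hence vanish. If
`q = 2m + 1`, the sum reduces to `C(3m+2, 2m+3) + C(3m+2, 2m+2) + C(3m+2, 2m)`. Splitting once more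
on the parity of `m` (with `k = ⌊m/2⌋`) and using Pascal's rule, this is congruent to
`C(3k+2, 2k+1)`, which is even by descent on `k` (`choose_three_mul_add_two`).
-/

/-- Lucas' theorem at the prime 2, with the last binary digits `i`, `j` split off. -/
lemma choose_lucas_two (a b i j : ℕ) (hi : i < 2) (hj : j < 2) :
    Nat.choose (2 * a + i) (2 * b + j) % 2 = (Nat.choose i j * Nat.choose a b) % 2 := by
  have : Fact (Nat.Prime 2) := ⟨Nat.prime_two⟩
  have h := Choose.choose_modEq_choose_mod_mul_choose_div_nat
    (n := 2 * a + i) (k := 2 * b + j) (p := 2)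
  rwa [show (2 * a + i) % 2 = i by omega, show (2 * b + j) % 2 = j by omega,
    show (2 * a + i) / 2 = a by omega, show (2 * b + j) / 2 = b by omega] at h

lemma choose_even_even (a b : ℕ) :
    Nat.choose (2 * a) (2 * b) % 2 = Nat.choose a b % 2 := by
  simpa using choose_lucas_two a b 0 0 (by norm_num) (by norm_num)

lemma choose_even_odd (a b : ℕ) : Nat.choose (2 * a) (2 * b + 1) % 2 = 0 := by
  simpa using choose_lucas_two a b 0 1 (by norm_num) (by norm_num)

lemma choose_odd_even (a b : ℕ) :
    Nat.choose (2 * a + 1) (2 * b) % 2 = Nat.choose a b % 2 := by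
  simpa using choose_lucas_two a b 1 0 (by norm_num) (by norm_num)

lemma choose_odd_odd (a b : ℕ) :
    Nat.choose (2 * a + 1) (2 * b + 1) % 2 = Nat.choose a b % 2 := by
  simpa using choose_lucas_two a b 1 1 (by norm_num) (by norm_num)

/-- For even `k` the top is even and the bottom odd; for `k = 2j + 1` Lucas' theorem turns the
coefficient into the same one at `j`. -/
lemma choose_three_mul_add_two (k : ℕ) : Nat.choose (3 * k + 2) (2 * k + 1) % 2 = 0 := by
  induction k using Nat.strong_induction_on with
  | _ k ih =>
    obtain ⟨j, rfl | rfl⟩ := Nat.even_or_odd' k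
    · have h := choose_even_odd (3 * j + 1) (2 * j)
      convert h using 3
      ring
    · have h := choose_odd_odd (3 * j + 2) (2 * j + 1)
      rw [ih j (by omega)] at h
      convert h using 3
      ring

/-- The sum that remains after one binary digit is removed in the case `q = 2m + 1`. -/
lemma reduced_sum_even (m : ℕ) :
    (Nat.choose (3 * m + 2) (2 * m + 3) + Nat.choose (3 * m + 2) (2 * m + 2) +
      Nat.choose (3 * m + 2) (2 * m)) % 2 = 0 := by
  obtain ⟨k, rfl | rfl⟩ := Nat.even_or_odd' m
  · have h1 := choose_even_odd (3 * k + 1) (2 * k + 1)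
    have h2 := choose_even_even (3 * k + 1) (2 * k + 1)
    have h3 := choose_even_even (3 * k + 1) (2 * k)
    have h := choose_three_mul_add_two k
    rw [Nat.choose_succ_succ' (3 * k + 1) (2 * k)] at h
    rw [show 3 * (2 * k) + 2 = 2 * (3 * k + 1) by ring,
      show 2 * (2 * k) + 3 = 2 * (2 * k + 1) + 1 by ring,
      show 2 * (2 * k) + 2 = 2 * (2 * k + 1) by ring]
    omega
  · have h1 := choose_odd_odd (3 * k + 2) (2 * k + 2)
    have h2 := choose_odd_even (3 * k + 2) (2 * k + 2)
    have h3 := choose_odd_even (3 * k + 2) (2 * k + 1)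
    have h := choose_three_mul_add_two k
    rw [show 3 * (2 * k + 1) + 2 = 2 * (3 * k + 2) + 1 by ring,
      show 2 * (2 * k + 1) + 3 = 2 * (2 * k + 2) + 1 by ring,
      show 2 * (2 * k + 1) + 2 = 2 * (2 * k + 2) by ring]
    omega

theorem stmt_11 (q : ℕ) (hq : 1 ≤ q) :
    Even (Nat.choose (3 * q + 2) (2 * q + 5) + Nat.choose (3 * q + 2) (2 * q + 3) +
      Nat.choose (3 * q + 2) (2 * q - 1)) := by
  rw [Nat.even_iff]
  obtain ⟨m, rfl | rfl⟩ := Nat.even_or_odd' q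
  · have h1 := choose_even_odd (3 * m + 1) (2 * m + 2)
    have h2 := choose_even_odd (3 * m + 1) (2 * m + 1)
    have h3 := choose_even_odd (3 * m + 1) (2 * m - 1)
    rw [show 3 * (2 * m) + 2 = 2 * (3 * m + 1) by ring,
      show 2 * (2 * m) + 5 = 2 * (2 * m + 2) + 1 by ring,
      show 2 * (2 * m) + 3 = 2 * (2 * m + 1) + 1 by ring,
      show 2 * (2 * m) - 1 = 2 * (2 * m - 1) + 1 by omega]
    omega
  · have h1 := choose_odd_odd (3 * m + 2) (2 * m + 3)
    have h2 := choose_odd_odd (3 * m + 2) (2 * m + 2)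
    have h3 := choose_odd_odd (3 * m + 2) (2 * m)
    have h := reduced_sum_even m
    rw [show 3 * (2 * m + 1) + 2 = 2 * (3 * m + 2) + 1 by ring,
      show 2 * (2 * m + 1) + 5 = 2 * (2 * m + 3) + 1 by ring,
      show 2 * (2 * m + 1) + 3 = 2 * (2 * m + 2) + 1 by ring,
      show 2 * (2 * m + 1) - 1 = 2 * (2 * m) + 1 by omega]
    omega
end

section
/- For all natural numbers n ≥ 0 and q ≥ 2, the congruence C(n+3q, 2q−1) ≡ C(n+3q−2, 2q−1) + C(n+3q−2, 2q−3) holds modulo 2. (In the paper's notation: b_{n,q} ≡ b_{n−2,q} + b_{n+1,q−1} mod 2, where b_{n,q} = C(n+3q, 2q−1).) -/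
theorem stmt_12 (n q : ℕ) (hq : 2 ≤ q) :
    Nat.choose (n + 3 * q) (2 * q - 1) ≡
      Nat.choose (n + 3 * q - 2) (2 * q - 1) + Nat.choose (n + 3 * q - 2) (2 * q - 3)
        [MOD 2] := by
  -- Pascal's rule applied twice: C(m+2, k+2) = C(m, k) + 2 C(m, k+1) + C(m, k+2).
  obtain ⟨m, hm⟩ : ∃ m, n + 3 * q = m + 2 := ⟨n + 3 * q - 2, by omega⟩
  obtain ⟨k, hk⟩ : ∃ k, 2 * q = k + 3 := ⟨2 * q - 3, by omega⟩
  have h₁ : k + 3 - 1 = k + 2 := by omega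
  rw [hm, hk, h₁, Nat.add_sub_cancel, Nat.add_sub_cancel]
  have e₁ := Nat.choose_succ_succ' (m + 1) (k + 1)
  have e₂ := Nat.choose_succ_succ' m k
  have e₃ := Nat.choose_succ_succ' m (k + 1)
  simp only [Nat.add_assoc, Nat.reduceAdd] at e₁ e₂ e₃
  unfold Nat.ModEq
  omega
end

section
/- Let ε : ℕ → ZMod 2, let s ≥ 1 and d be natural numbers, and let T be the set of indices i such that the i-th binary digit of s equals 1 (so s = Σ_{i ∈ T} 2^i). Then, in ZMod 2, the sum over all s-tuples (i₁, …, i_s) of natural numbers with i₁ + ⋯ + i_s = d of the products ε(i₁)⋯ε(i_s) equals the sum over all families (a_i)_{i ∈ T} of natural numbers satisfying Σ_{i ∈ T} a_i · 2^i = d of the products Π_{i ∈ T} ε(a_i). -/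
/-!
Let `F = ∑ ε(n) Xⁿ` be the generating series of `ε` over `ZMod 2`. The left-hand side is the
coefficient of `X ^ d` in `F ^ s`. Writing `s = ∑ i ∈ T, 2 ^ i` gives `F ^ s = ∏ i ∈ T, F ^ (2 ^ i)`,
and iterating Frobenius gives `F(X) ^ (2 ^ i) = F(X ^ (2 ^ i))`, the substitution being
`PowerSeries.expand`. The coefficient of `X ^ d` in the resulting product is the right-hand side.
-/

open PowerSeries in
theorem coeff_prod_univ {ι R : Type*} [Fintype ι] [DecidableEq ι] [CommSemiring R]
    (F : ι → PowerSeries R) (d : ℕ) :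
    coeff d (∏ i, F i) = ∑ f ∈ Finset.piAntidiag Finset.univ d, ∏ i, coeff (f i) (F i) := by
  rw [coeff_prod]
  refine Finset.sum_bij' (fun l _ => ⇑l) (fun f _ => Finsupp.equivFunOnFinite.symm f) ?_ ?_ ?_ ?_ ?_
  all_goals simp

open PowerSeries in
/-- Frobenius over `ZMod 2`, where coefficients are fixed: `F(X) ^ (2 ^ k) = F(X ^ (2 ^ k))`. -/
theorem pow_two_pow_eq_expand (F : PowerSeries (ZMod 2)) (k : ℕ) :
    F ^ 2 ^ k = expand (2 ^ k) (by positivity) F := by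
  have h := MvPowerSeries.map_iterateFrobenius_expand 2 two_ne_zero F k
  have hid : iterateFrobenius (ZMod 2) 2 k = RingHom.id _ := Subsingleton.elim _ _
  rw [hid, MvPowerSeries.map_id] at h
  exact h.symm

open PowerSeries in
theorem stmt_13 (ε : ℕ → ZMod 2) (s d : ℕ) (hs : 1 ≤ s) (T : Finset ℕ)
    (hT : ∀ i, i ∈ T ↔ s.testBit i) :
    (∑ f ∈ Finset.Nat.antidiagonalTuple s d, ∏ j, ε (f j)) =
      ∑ a ∈ (Fintype.piFinset (fun _ : T => Finset.range (d + 1))).filter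
          (fun a => ∑ i : T, a i * 2 ^ (i : ℕ) = d),
        ∏ i : T, ε (a i) := by
  have hsum : ∑ i : T, 2 ^ (i : ℕ) = s := by
    have hTs : T = s.bitIndices.toFinset := by ext i; simp [hT]
    rw [Finset.sum_coe_sort T (fun i => 2 ^ i), hTs]
    exact Finset.sum_toFinset_bitIndices_two_pow s
  have hF : (mk ε) ^ s = ∏ i : T, expand (2 ^ (i : ℕ)) (by positivity) (mk ε) := by
    simp_rw [← pow_two_pow_eq_expand, Finset.prod_pow_eq_pow_sum, hsum]
  have hL : coeff d ((mk ε) ^ s) = ∑ f ∈ Finset.Nat.antidiagonalTuple s d, ∏ j, ε (f j) := by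
    have := coeff_prod_univ (fun _ : Fin s => mk ε) d
    simpa [Finset.piAntidiag_univ_fin_eq_antidiagonalTuple] using this
  rw [← hL, hF, coeff_prod_univ]
  symm
  -- Only exponent families of the form `i ↦ a i * 2 ^ i` contribute to the coefficient.
  refine Finset.sum_of_injOn (fun a i => a i * 2 ^ (i : ℕ)) ?_ ?_ ?_ ?_
  · intro a _ b _ h
    funext i
    simpa using congrFun h i
  · intro a ha
    simpa using (Finset.mem_filter.1 ha).2
  · intro f hf hfa
    by_contra hne
    have hdvd : ∀ i : T, 2 ^ (i : ℕ) ∣ f i := fun i => by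
      by_contra h
      exact hne (Finset.prod_eq_zero (Finset.mem_univ i) (coeff_expand_of_not_dvd _ _ _ h))
    refine hfa ⟨fun i => f i / 2 ^ (i : ℕ), ?_, funext fun i => Nat.div_mul_cancel (hdvd i)⟩
    have hfd : ∑ i, f i = d := by simpa using hf
    simp only [Finset.coe_filter, Set.mem_ofPred_eq, Fintype.mem_piFinset, Finset.mem_range,
      Nat.div_mul_cancel (hdvd _), hfd, and_true]
    intro i
    have h1 : f i ≤ d := hfd ▸ Finset.single_le_sum (f := f) (by simp) (Finset.mem_univ i)
    have h2 := Nat.div_le_self (f i) (2 ^ (i : ℕ))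
    omega
  · intro a _
    refine Finset.prod_congr rfl fun i _ => ?_
    beta_reduce
    rw [mul_comm, coeff_expand_mul, coeff_mk]
end

section
/- Fix a prime p and a natural number s ≥ 3. For every vector v : Fin s → ZMod p, the signed sum Σ_{b ∈ B_s} Σ_{σ ∈ Perm(Fin s)} sign(σ) • [(b · P_σ)ᵀ v] equals 0 in the free abelian group on the set of vectors Fin s → ZMod p. (This is the vanishing of the Steinberg idempotent applied to any character of (F_p)^s, which computes K⁰M(s) = 0 for s ≥ 3.) -/
/-!
Put `F(w) = ∑ σ, sign σ • [w P_σ]` (`altSum`), so that the sum in question is `∑ b, F(v b)`.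
Reindexing by a permutation shows that `F` is alternating: `F(w ∘ swap i j) = -F(w)`, and hence
`F(w) = 0` whenever `w` has a repeated entry.

Let `τ` be the transposition of the coordinates `1` and `2`, which exist since `s ≥ 3`. If the
entries of `w` are distinct, there is an invertible upper triangular `U(w)` (`swapMat`) with
`w U(w) = w ∘ τ`: either `w 0 ≠ 0`, and a multiple of `w 0` can be added to each later coordinate;
or `w 0 = 0`, so that `w 1` and `w 2` are both nonzero and can be rescaled into one another.
Moreover `U(w) U(w ∘ τ) = 1`. Thus `b ↦ b U(v b)` is an involution on those `b` for which `v b`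
has distinct entries, and it changes the sign of `F(v b)`; all terms cancel in pairs.
-/

open scoped Classical

/-- The alternating sum `∑ σ, sign σ • [w P_σ]` over all rearrangements of `w`. -/
noncomputable def altSum {p s : ℕ} (w : Fin s → ZMod p) : (Fin s → ZMod p) →₀ ℤ :=
  ∑ σ : Equiv.Perm (Fin s), (Equiv.Perm.sign σ : ℤ) •
    Finsupp.single (Matrix.vecMul w (Equiv.Perm.permMatrix (ZMod p) σ)) 1

lemma vecMul_permMatrix_eq {p s : ℕ} (w : Fin s → ZMod p) (σ : Equiv.Perm (Fin s)) :
    Matrix.vecMul w (Equiv.Perm.permMatrix (ZMod p) σ) = w ∘ σ.symm :=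
  Matrix.vecMul_permMatrix _

lemma altSum_swap {p s : ℕ} (w : Fin s → ZMod p) {i j : Fin s} (hij : i ≠ j) :
    altSum (w ∘ Equiv.swap i j) = -altSum w := by
  unfold altSum
  rw [← Finset.sum_neg_distrib]
  refine Fintype.sum_equiv (Equiv.mulRight (Equiv.swap i j)) _ _ fun σ => ?_
  simp only [vecMul_permMatrix_eq, Equiv.coe_mulRight, Equiv.Perm.sign_mul,
    Equiv.Perm.sign_swap hij]
  have h : w ∘ (σ * Equiv.swap i j).symm = (w ∘ Equiv.swap i j) ∘ σ.symm := by
    funext k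
    simp [Equiv.Perm.mul_def]
  rw [h]
  simp

lemma altSum_eq_zero {p s : ℕ} (w : Fin s → ZMod p) (hw : ¬ Function.Injective w) :
    altSum w = 0 := by
  simp only [Function.Injective, not_forall] at hw
  obtain ⟨i, j, h, hij⟩ := hw
  have h1 : w ∘ Equiv.swap i j = w := by
    funext k
    simp only [Function.comp, Equiv.swap_apply_def]
    split_ifs <;> simp_all
  have h2 := altSum_swap w hij
  rw [h1] at h2
  exact self_eq_neg.mp h2

/-- A matrix carrying the row vector `w` to `w ∘ τ`, provided that `τ` preserves the zeros of `w` in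
case `w z = 0`: it differs from the identity only in row `z` if `w z ≠ 0`, and is diagonal otherwise.
It is upper triangular when `z` is the least index. -/
noncomputable def swapMat {p s : ℕ} [Fact p.Prime] (z : Fin s) (τ : Equiv.Perm (Fin s))
    (w : Fin s → ZMod p) : Matrix (Fin s) (Fin s) (ZMod p) :=
  if w z ≠ 0 then 1 + Matrix.vecMulVec (Pi.single z 1) ((w z)⁻¹ • (w ∘ τ - w))
  else Matrix.diagonal fun i => if w i = 0 then 1 else w (τ i) / w i

section swapMat

variable {p s : ℕ} [Fact p.Prime] {z : Fin s} {τ : Equiv.Perm (Fin s)} {w : Fin s → ZMod p}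

lemma vecMul_swapMat (hw : w z = 0 → ∀ i, w i = 0 → w (τ i) = 0) :
    Matrix.vecMul w (swapMat z τ w) = w ∘ τ := by
  unfold swapMat
  split_ifs with h
  · rw [Matrix.vecMul_add, Matrix.vecMul_one, Matrix.vecMul_vecMulVec]
    funext i
    simp
    field_simp
    ring
  · funext i
    rw [Matrix.vecMul_diagonal]
    have := hw (by simpa using h) i
    simp only [Function.comp]
    split_ifs with hi
    · simp [hi, this hi]
    · field_simp

lemma swapMat_mul (hz : τ z = z) (hτ : ∀ i, τ (τ i) = i)
    (hw : w z = 0 → ∀ i, w i = 0 → w (τ i) = 0) :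
    swapMat z τ w * swapMat z τ (w ∘ τ) = 1 := by
  unfold swapMat
  by_cases h : w z = 0
  · have hw := hw h
    simp only [Function.comp, hz, h, ne_eq, not_true_eq_false, if_false, hτ,
      Matrix.diagonal_mul_diagonal]
    rw [← Matrix.diagonal_one]
    congr 1
    funext i
    by_cases hi : w i = 0
    · simp [hi, hw i hi]
    · have hi' : w (τ i) ≠ 0 := fun h' => hi (by simpa [hτ] using hw _ h')
      simp only [hi, hi', if_false]
      field_simp
  · have hc : (w ∘ τ) ∘ τ = w := by funext i; simp [hτ]
    rw [if_pos h, if_pos (by simpa [hz] using h), hc]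
    simp only [Function.comp_apply, hz]
    rw [mul_add, add_mul, add_mul, Matrix.vecMulVec_mul_vecMulVec]
    ext i j
    simp [Matrix.vecMulVec_apply, hz]
    ring

lemma swapMat_upper (hz : ∀ i, z ≤ i) {i j : Fin s} (hij : j < i) : swapMat z τ w i j = 0 := by
  unfold swapMat
  split_ifs with h
  · have : i ≠ z := fun h' => absurd (hz j) (by rw [← h']; exact not_le.mpr hij)
    simp [Matrix.vecMulVec_apply, Matrix.one_apply_ne hij.ne', this]
  · exact Matrix.diagonal_apply_ne _ hij.ne'

end swapMat

theorem stmt_14 (p : ℕ) [Fact p.Prime] (s : ℕ) (hs : 3 ≤ s)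
    (v : Fin s → ZMod p) :
    (∑ b ∈ Finset.univ.filter
        (fun b : Matrix (Fin s) (Fin s) (ZMod p) =>
          IsUnit b ∧ ∀ i j, j < i → b i j = 0),
      ∑ σ : Equiv.Perm (Fin s),
        (Equiv.Perm.sign σ : ℤ) •
          (Finsupp.single (Matrix.vecMul v (b * Equiv.Perm.permMatrix (ZMod p) σ)) 1 :
            (Fin s → ZMod p) →₀ ℤ)) = 0 := by
  let z : Fin s := ⟨0, by omega⟩
  let x : Fin s := ⟨1, by omega⟩
  let y : Fin s := ⟨2, by omega⟩
  have hzx : z ≠ x := by simp [z, x]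
  have hzy : z ≠ y := by simp [z, y]
  have hxy : x ≠ y := by simp [x, y]
  have hzle : ∀ i, z ≤ i := fun i => Nat.zero_le _
  let τ : Equiv.Perm (Fin s) := Equiv.swap x y
  have hz : τ z = z := Equiv.swap_apply_of_ne_of_ne hzx hzy
  have hτ : ∀ i, τ (τ i) = i := fun i => by simp [τ]
  -- For injective `w` with `w z = 0`, the only zero of `w` is `z`, which `τ` fixes.
  have key : ∀ w : Fin s → ZMod p, Function.Injective w →
      w z = 0 → ∀ i, w i = 0 → w (τ i) = 0 := by
    intro w hw h0 i hi
    rw [hw (hi.trans h0.symm), hz, h0]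
  have hterm : ∀ b : Matrix (Fin s) (Fin s) (ZMod p),
      (∑ σ : Equiv.Perm (Fin s), (Equiv.Perm.sign σ : ℤ) •
          (Finsupp.single (Matrix.vecMul v (b * Equiv.Perm.permMatrix (ZMod p) σ)) 1 :
            (Fin s → ZMod p) →₀ ℤ)) = altSum (Matrix.vecMul v b) := by
    intro b
    simp only [altSum, Matrix.vecMul_vecMul]
  simp only [hterm]
  let g : Matrix (Fin s) (Fin s) (ZMod p) → Matrix (Fin s) (Fin s) (ZMod p) := fun b =>
    if Function.Injective (Matrix.vecMul v b) then b * swapMat z τ (Matrix.vecMul v b) else b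
  have hgv : ∀ b, Function.Injective (Matrix.vecMul v b) →
      Matrix.vecMul v (g b) = Matrix.vecMul v b ∘ τ := by
    intro b hb
    simp only [g, if_pos hb]
    rw [← Matrix.vecMul_vecMul, vecMul_swapMat (key _ hb)]
  have hsum : ∀ b, altSum (Matrix.vecMul v b) + altSum (Matrix.vecMul v (g b)) = 0 := by
    intro b
    by_cases hb : Function.Injective (Matrix.vecMul v b)
    · rw [hgv b hb, altSum_swap _ hxy, add_neg_cancel]
    · simp only [g, if_neg hb, altSum_eq_zero _ hb, add_zero]
  refine Finset.sum_involution (fun b _ => g b) (fun b _ => hsum b) ?_ ?_ ?_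
  · intro b _ hne heq
    have h := hsum b
    rw [heq] at h
    exact hne (self_eq_neg.mp (eq_neg_of_add_eq_zero_left h))
  · intro b hb
    simp only [Finset.mem_filter, Finset.mem_univ, true_and] at hb ⊢
    by_cases hi : Function.Injective (Matrix.vecMul v b)
    · simp only [g, if_pos hi]
      refine ⟨hb.1.mul (IsUnit.of_mul_eq_one _ (swapMat_mul hz hτ (key _ hi))), ?_⟩
      intro i j hij
      rw [Matrix.mul_apply]
      refine Finset.sum_eq_zero fun k _ => ?_
      rcases lt_or_ge k i with hk | hk
      · rw [hb.2 i k hk, zero_mul]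
      · rw [swapMat_upper hzle (hij.trans_le hk), mul_zero]
    · simpa only [g, if_neg hi] using hb
  · intro b _
    by_cases hi : Function.Injective (Matrix.vecMul v b)
    · have hi' : Function.Injective (Matrix.vecMul v (g b)) := by
        rw [hgv b hi]
        exact hi.comp τ.injective
      have h1 : g (g b) = g b * swapMat z τ (Matrix.vecMul v b ∘ τ) := by
        rw [← hgv b hi]
        exact if_pos hi'
      have h2 : g b = b * swapMat z τ (Matrix.vecMul v b) := if_pos hi
      rw [h1, h2, mul_assoc, swapMat_mul hz hτ (key _ hi), mul_one]
    · simp only [g, if_neg hi]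
end

section
/- Fix a prime p and let s = 2, with standard basis vectors e₁ = (1,0) and e₂ = (0,1) in (ZMod p)². Then in the free abelian group on the vectors Fin 2 → ZMod p: Σ_{b ∈ B_2} Σ_{σ ∈ Perm(Fin 2)} sign(σ) • [(b · P_σ)ᵀ e₁] = (p−1) • Σ_{c ∈ (ZMod p)ˣ} ([c·e₁] − [c·e₂]), and Σ_{b ∈ B_2} Σ_{σ ∈ Perm(Fin 2)} sign(σ) • [(b · P_σ)ᵀ e₂] = p(p−1) • Σ_{c ∈ (ZMod p)ˣ} ([c·e₂] − [c·e₁]). -/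
/-!
An element of `B_2` is `!![a, x; 0, d]` with `a`, `d` units and `x` arbitrary
(`sum_upperTriangular`), and the two permutation matrices either fix or swap the coordinates of
a row vector (`sum_perm_two`).

For `e₂` the row is `(0, d)`, and the `p (p - 1)` choices of `(a, x)` give the multiplicity.
For `e₁` the row is `(a, x)`, with `p - 1` choices of `d`. The sum of `[(a, x)] - [(x, a)]` over
the pairs of units `(a, x)` vanishes, since swapping `a` and `x` negates it; only the terms with
`x = 0` survive.
-/

open scoped Classical

/-- Parametrization of the invertible upper-triangular `2 × 2` matrices by their diagonal units
and their off-diagonal entry. -/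
lemma sum_upperTriangular {p : ℕ} [Fact p.Prime] {M : Type*} [AddCommMonoid M]
    (f : Matrix (Fin 2) (Fin 2) (ZMod p) → M) :
    ∑ b ∈ Finset.univ.filter
        (fun b : Matrix (Fin 2) (Fin 2) (ZMod p) =>
          IsUnit b ∧ ∀ i j, j < i → b i j = 0), f b =
      ∑ a : (ZMod p)ˣ, ∑ x : ZMod p, ∑ d : (ZMod p)ˣ, f !![(a : ZMod p), x; 0, (d : ZMod p)] := by
  simp only [← Fintype.sum_prod_type']
  symm
  refine Finset.sum_bij
    (fun (t : (ZMod p)ˣ × ZMod p × (ZMod p)ˣ) _ =>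
      !![(t.1 : ZMod p), t.2.1; 0, (t.2.2 : ZMod p)]) ?_ ?_ ?_ ?_
  · rintro ⟨a, x, d⟩ -
    simp only [Finset.mem_filter, Finset.mem_univ, true_and, Matrix.isUnit_iff_isUnit_det,
      Matrix.det_fin_two_of, mul_zero, sub_zero]
    refine ⟨a.isUnit.mul d.isUnit, fun i j h => ?_⟩
    fin_cases i <;> fin_cases j <;> simp at h ⊢
  · rintro ⟨a, x, d⟩ - ⟨a', x', d'⟩ - h
    have h00 := congrFun (congrFun h 0) 0
    have h01 := congrFun (congrFun h 0) 1
    have h11 := congrFun (congrFun h 1) 1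
    simp at h00 h01 h11
    simp [Units.ext_iff, h00, h01, h11]
  · intro b hb
    simp only [Finset.mem_filter, Finset.mem_univ, true_and, Matrix.isUnit_iff_isUnit_det,
      Matrix.det_fin_two] at hb
    obtain ⟨hu, hz⟩ := hb
    have h10 : b 1 0 = 0 := hz 1 0 (by decide)
    rw [h10, mul_zero, sub_zero, IsUnit.mul_iff] at hu
    obtain ⟨⟨a, ha⟩, ⟨d, hd⟩⟩ := hu
    refine ⟨(a, b 0 1, d), Finset.mem_univ _, ?_⟩
    ext i j
    fin_cases i <;> fin_cases j <;> simp [ha, hd, h10]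
  · intro _ _
    rfl

lemma sum_perm_two {p : ℕ} (v : Fin 2 → ZMod p) (b : Matrix (Fin 2) (Fin 2) (ZMod p)) :
    ∑ σ : Equiv.Perm (Fin 2),
        (Equiv.Perm.sign σ : ℤ) •
          (Finsupp.single (Matrix.vecMul v (b * Equiv.Perm.permMatrix (ZMod p) σ)) 1 :
            (Fin 2 → ZMod p) →₀ ℤ) =
      Finsupp.single ![Matrix.vecMul v b 0, Matrix.vecMul v b 1] 1 -
        Finsupp.single ![Matrix.vecMul v b 1, Matrix.vecMul v b 0] 1 := by
  have huniv : (Finset.univ : Finset (Equiv.Perm (Fin 2))) = {1, Equiv.swap 0 1} := by decide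
  have hne : (1 : Equiv.Perm (Fin 2)) ≠ Equiv.swap 0 1 := by decide
  have h1 : Matrix.vecMul v (b * Equiv.Perm.permMatrix (ZMod p) (1 : Equiv.Perm (Fin 2))) =
      ![Matrix.vecMul v b 0, Matrix.vecMul v b 1] := by
    ext i
    fin_cases i <;> simp
  have h2 : Matrix.vecMul v (b * Equiv.Perm.permMatrix (ZMod p) (Equiv.swap (0 : Fin 2) 1)) =
      ![Matrix.vecMul v b 1, Matrix.vecMul v b 0] := by
    rw [← Matrix.vecMul_vecMul, Matrix.vecMul_permMatrix]
    ext i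
    fin_cases i <;> simp
  rw [huniv, Finset.sum_pair hne, h1, h2, Equiv.Perm.sign_swap (by decide)]
  simp [sub_eq_add_neg]

lemma sum_zmod_eq_zero_add_sum_units {p : ℕ} [Fact p.Prime] {M : Type*} [AddCommMonoid M]
    (f : ZMod p → M) : ∑ x, f x = f 0 + ∑ c : (ZMod p)ˣ, f c := by
  rw [Fintype.sum_eq_add_sum_subtype_ne f 0]
  congr 1
  exact (Fintype.sum_equiv unitsEquivNeZero _ _ fun _ => rfl).symm

/-- The terms with both `a` and `x` units cancel in pairs, leaving those with `x = 0`. -/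
lemma sum_antisymm {p : ℕ} [Fact p.Prime] {M : Type*} [AddCommGroup M]
    (g : ZMod p → ZMod p → M) :
    ∑ a : (ZMod p)ˣ, ∑ x : ZMod p, (g a x - g x a) = ∑ a : (ZMod p)ˣ, (g a 0 - g 0 a) := by
  simp only [sum_zmod_eq_zero_add_sum_units, Finset.sum_add_distrib]
  rw [add_eq_left]
  simp only [Finset.sum_sub_distrib]
  rw [sub_eq_zero, Finset.sum_comm]

lemma card_units_zmod_int (p : ℕ) [Fact p.Prime] :
    ((Fintype.card (ZMod p)ˣ : ℕ) : ℤ) = (p : ℤ) - 1 := by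
  rw [ZMod.card_units, Nat.cast_sub (Fact.out : p.Prime).one_le, Nat.cast_one]

theorem stmt_15 (p : ℕ) [Fact p.Prime] :
    (∑ b ∈ Finset.univ.filter
        (fun b : Matrix (Fin 2) (Fin 2) (ZMod p) =>
          IsUnit b ∧ ∀ i j, j < i → b i j = 0),
      ∑ σ : Equiv.Perm (Fin 2),
        (Equiv.Perm.sign σ : ℤ) •
          (Finsupp.single (Matrix.vecMul ![1, 0] (b * Equiv.Perm.permMatrix (ZMod p) σ)) 1 :
            (Fin 2 → ZMod p) →₀ ℤ)) =
      ((p : ℤ) - 1) • ∑ c : (ZMod p)ˣ,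
        ((Finsupp.single ((c : ZMod p) • ![1, 0]) 1 : (Fin 2 → ZMod p) →₀ ℤ) -
          Finsupp.single ((c : ZMod p) • ![0, 1]) 1) ∧
    (∑ b ∈ Finset.univ.filter
        (fun b : Matrix (Fin 2) (Fin 2) (ZMod p) =>
          IsUnit b ∧ ∀ i j, j < i → b i j = 0),
      ∑ σ : Equiv.Perm (Fin 2),
        (Equiv.Perm.sign σ : ℤ) •
          (Finsupp.single (Matrix.vecMul ![0, 1] (b * Equiv.Perm.permMatrix (ZMod p) σ)) 1 :
            (Fin 2 → ZMod p) →₀ ℤ)) =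
      ((p : ℤ) * ((p : ℤ) - 1)) • ∑ c : (ZMod p)ˣ,
        ((Finsupp.single ((c : ZMod p) • ![0, 1]) 1 : (Fin 2 → ZMod p) →₀ ℤ) -
          Finsupp.single ((c : ZMod p) • ![1, 0]) 1) := by
  have hrow1 : ∀ a x d : ZMod p, Matrix.vecMul ![1, 0] !![a, x; 0, d] = ![a, x] := by
    intro a x d
    ext i
    fin_cases i <;> simp [Matrix.vecMul, dotProduct]
  have hrow2 : ∀ a x d : ZMod p, Matrix.vecMul ![0, 1] !![a, x; 0, d] = ![0, d] := by
    intro a x d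
    ext i
    fin_cases i <;> simp [Matrix.vecMul, dotProduct]
  have he1 : ∀ c : ZMod p, c • (![1, 0] : Fin 2 → ZMod p) = ![c, 0] := by simp
  have he2 : ∀ c : ZMod p, c • (![0, 1] : Fin 2 → ZMod p) = ![0, c] := by simp
  simp only [sum_perm_two, sum_upperTriangular, hrow1, hrow2, he1, he2, Matrix.cons_val_zero,
    Matrix.cons_val_one, Finset.sum_const, Finset.card_univ, ← Finset.smul_sum]
  refine ⟨?_, ?_⟩
  · rw [sum_antisymm (fun a x => (Finsupp.single ![a, x] 1 : (Fin 2 → ZMod p) →₀ ℤ)),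
      ← card_units_zmod_int, natCast_zsmul]
  · rw [← card_units_zmod_int, ZMod.card, mul_comm, mul_smul, natCast_zsmul, natCast_zsmul]
end

section
/- Let p be a prime, s ≥ 1 a natural number, and let l be a generator of the cyclic group (ZMod p)ˣ. Then the set of functions c : ((Fin s → ZMod p) → ℤ_p) satisfying Σ_v c(v) = 0 and c(l·v) = c(v) for all v (scalar multiplication of the vector v by the unit l) is a ℤ_p-submodule of the function space which is free of rank (p^s − 1)/(p − 1). -/
/-!
Since `l` generates `(ZMod p)ˣ`, the second condition says that `c` is constant on the orbits of
all nonzero scalars (`smul_invariant_of_generator`), i.e. on `{0}` and on the punctured lines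
through the origin. The condition that the sum vanishes determines `c 0` from the remaining
values. So restricting `c` to nonzero vectors identifies the submodule with the space of all
functions on the projective space `ℙ (ZMod p) (Fin s → ZMod p)` (`invariantEquiv`), which is free
of rank the number `(p ^ s - 1) / (p - 1)` of points of that projective space.
-/

open scoped LinearAlgebra.Projectivization

/-- A function fixed by scaling with a generator of the unit group is fixed by scaling with every
unit. -/
lemma smul_invariant_of_generator {p s : ℕ} {R : Type*} {l : (ZMod p)ˣ}
    (hl : ∀ u : (ZMod p)ˣ, u ∈ Subgroup.zpowers l) {c : (Fin s → ZMod p) → R}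
    (hc : ∀ v, c ((l : ZMod p) • v) = c v) (u : (ZMod p)ˣ) (v : Fin s → ZMod p) :
    c (u • v) = c v := by
  let H : Subgroup (ZMod p)ˣ :=
    { carrier := {u | ∀ v, c (u • v) = c v}
      one_mem' := fun v => by simp
      mul_mem' := fun {a b} ha hb v => by
        rw [mul_smul, ha, hb]
      inv_mem' := fun {a} ha v => by
        rw [← ha (a⁻¹ • v), smul_inv_smul] }
  have hle : Subgroup.zpowers l ≤ H := by
    rw [Subgroup.zpowers_le]
    exact fun v => hc v
  exact hle (hl u) v

/-- The functions with zero sum that are invariant under scaling by `l`. -/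
def invariantSubmodule (p : ℕ) [Fact p.Prime] (s : ℕ) (l : (ZMod p)ˣ) :
    Submodule ℤ_[p] ((Fin s → ZMod p) → ℤ_[p]) where
  carrier := {c | (∑ v, c v) = 0 ∧ ∀ v, c ((l : ZMod p) • v) = c v}
  zero_mem' := by simp
  add_mem' := fun {a b} ha hb => by
    refine ⟨?_, fun v => ?_⟩
    · simp [Finset.sum_add_distrib, ha.1, hb.1]
    · simp only [Pi.add_apply, ha.2, hb.2]
  smul_mem' := fun r a ha => by
    refine ⟨?_, fun v => ?_⟩
    · simp [← Finset.mul_sum, ha.1]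
    · simp only [Pi.smul_apply, ha.2]

open Classical in
/-- The extension by zero to all vectors of a function on projective space. -/
noncomputable def conePullback {p s : ℕ} [Fact p.Prime]
    (d : ℙ (ZMod p) (Fin s → ZMod p) → ℤ_[p]) (v : Fin s → ZMod p) : ℤ_[p] :=
  if h : v = 0 then 0 else d (Projectivization.mk _ v h)

lemma conePullback_zero {p s : ℕ} [Fact p.Prime]
    (d : ℙ (ZMod p) (Fin s → ZMod p) → ℤ_[p]) : conePullback d 0 = 0 := by
  simp [conePullback]

lemma conePullback_of_ne {p s : ℕ} [Fact p.Prime]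
    (d : ℙ (ZMod p) (Fin s → ZMod p) → ℤ_[p]) {v : Fin s → ZMod p} (h : v ≠ 0) :
    conePullback d v = d (Projectivization.mk _ v h) := by
  simp [conePullback, h]

lemma conePullback_smul {p s : ℕ} [Fact p.Prime]
    (d : ℙ (ZMod p) (Fin s → ZMod p) → ℤ_[p]) (u : (ZMod p)ˣ) (v : Fin s → ZMod p) :
    conePullback d ((u : ZMod p) • v) = conePullback d v := by
  by_cases h : v = 0
  · simp [h]
  · have h' : (u : ZMod p) • v ≠ 0 := smul_ne_zero u.ne_zero h
    rw [conePullback_of_ne d h, conePullback_of_ne d h']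
    congr 1
    exact (Projectivization.mk_eq_mk_iff _ _ _ h' h).2 ⟨u, rfl⟩

/-- An invariant function with zero sum is recovered from its values on representatives of the
points of projective space: `conePullback` gives the values off the origin, and the value at the
origin is minus their sum. -/
noncomputable def invariantEquiv (p : ℕ) [Fact p.Prime] (s : ℕ) (l : (ZMod p)ˣ)
    (hl : ∀ u : (ZMod p)ˣ, u ∈ Subgroup.zpowers l) :
    invariantSubmodule p s l ≃ₗ[ℤ_[p]] (ℙ (ZMod p) (Fin s → ZMod p) → ℤ_[p]) where
  toFun c x := c.1 x.rep
  map_add' _ _ := rfl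
  map_smul' _ _ := rfl
  invFun d := ⟨conePullback d - Pi.single 0 (∑ w, conePullback d w), by
    refine ⟨by simp, fun v => ?_⟩
    rw [Pi.sub_apply, Pi.sub_apply, conePullback_smul]
    by_cases h : v = 0
    · simp [h]
    · rw [Pi.single_eq_of_ne h, Pi.single_eq_of_ne (smul_ne_zero l.ne_zero h)]⟩
  left_inv c := by
    obtain ⟨c, hsum, hinv⟩ := c
    have hne : ∀ v, v ≠ 0 →
        conePullback (fun x : ℙ (ZMod p) (Fin s → ZMod p) => c x.rep) v = c v := by
      intro v h
      rw [conePullback_of_ne _ h]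
      obtain ⟨u, hu⟩ := Projectivization.exists_smul_eq_mk_rep (ZMod p) v h
      rw [← hu]
      exact smul_invariant_of_generator hl hinv u v
    apply Subtype.ext
    funext v
    change conePullback (fun x : ℙ (ZMod p) (Fin s → ZMod p) => c x.rep) v -
      (Pi.single 0 (∑ w, conePullback (fun x : ℙ (ZMod p) (Fin s → ZMod p) => c x.rep) w) :
        (Fin s → ZMod p) → ℤ_[p]) v = c v
    by_cases h : v = 0
    · subst h
      rw [← Finset.add_sum_erase _ _ (Finset.mem_univ 0)] at hsum
      rw [Pi.single_eq_same, ← Finset.add_sum_erase _ _ (Finset.mem_univ 0), conePullback_zero,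
        Finset.sum_congr rfl fun w hw => hne w (Finset.ne_of_mem_erase hw)]
      linear_combination -hsum
    · rw [Pi.single_eq_of_ne h, hne v h, sub_zero]
  right_inv d := by
    funext x
    change conePullback d x.rep - (Pi.single 0 (∑ w, conePullback d w) :
      (Fin s → ZMod p) → ℤ_[p]) x.rep = d x
    rw [Pi.single_eq_of_ne x.rep_nonzero, sub_zero, conePullback_of_ne d x.rep_nonzero, x.mk_rep]

theorem stmt_16 (p : ℕ) [Fact p.Prime] (s : ℕ) (hs : 1 ≤ s) (l : (ZMod p)ˣ)
    (hl : ∀ u : (ZMod p)ˣ, u ∈ Subgroup.zpowers l) :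
    ∃ S : Submodule ℤ_[p] ((Fin s → ZMod p) → ℤ_[p]),
      (∀ c : (Fin s → ZMod p) → ℤ_[p],
        c ∈ S ↔ ((∑ v : Fin s → ZMod p, c v) = 0 ∧
          ∀ v : Fin s → ZMod p, c ((l : ZMod p) • v) = c v)) ∧
      Module.Free ℤ_[p] S ∧
      Module.finrank ℤ_[p] S = (p ^ s - 1) / (p - 1) := by
  have : Finite (ℙ (ZMod p) (Fin s → ZMod p)) := inferInstance
  have := Fintype.ofFinite (ℙ (ZMod p) (Fin s → ZMod p))
  refine ⟨invariantSubmodule p s l, fun c => Iff.rfl,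
    Module.Free.of_equiv (invariantEquiv p s l hl).symm, ?_⟩
  rw [(invariantEquiv p s l hl).finrank_eq, Module.finrank_fintype_fun_eq_card,
    ← Nat.card_eq_fintype_card, Projectivization.card'']
  simp
end

section
/- Let p be an odd prime and let l ∈ ℤ_pˣ be a topological generator of the unit group of the p-adic integers (i.e. the subgroup generated by l is dense in ℤ_pˣ). Then for every natural number i ≥ 1: if (p−1) does not divide i, the element 1 − l^i is a unit in ℤ_p; and if (p−1) divides i, the p-adic valuation of 1 − l^i equals ν_p(i) + 1, where ν_p(i) is the exponent of the largest power of p dividing i. -/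
/-!
Write `φ` for Euler's totient function. Since `l` generates a dense subgroup of `ℤ_pˣ` and
reduction `ℤ_pˣ → (ℤ/p^n)ˣ` is surjective with open fibres, the image of `l` generates
`(ℤ/p^n)ˣ` for `n ≥ 1`, so it has order `φ(p^n) = p^(n-1) (p-1)`. Hence `p^n ∣ 1 - l^i` if and
only if `p^(n-1) (p-1) ∣ i` (`pow_dvd_one_sub_pow_iff`). The case `n = 1` gives the claim about
units. When `p - 1 ∣ i`, coprimality of `p` and `p - 1` turns the condition into
`n - 1 ≤ ν_p(i)`, which determines the valuation of `1 - l^i`.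
-/

theorem toZModPow_eq_iff_dvd_sub (p : ℕ) [Fact p.Prime] (n : ℕ) (x y : ℤ_[p]) :
    PadicInt.toZModPow n x = PadicInt.toZModPow n y ↔ (p : ℤ_[p]) ^ n ∣ x - y := by
  rw [← sub_eq_zero, ← map_sub, ← RingHom.mem_ker, PadicInt.ker_toZModPow,
    Ideal.mem_span_singleton]

/-- A topological generator of `ℤ_pˣ` reduces to a generator of `(ℤ/p^n)ˣ`. -/
theorem orderOf_map_toZModPow (p : ℕ) [Fact p.Prime] (l : ℤ_[p]ˣ)
    (hl : Dense ((Subgroup.zpowers l : Subgroup ℤ_[p]ˣ) : Set ℤ_[p]ˣ)) (n : ℕ) (hn : 1 ≤ n) :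
    orderOf (Units.map (PadicInt.toZModPow (p := p) n : ℤ_[p] →* ZMod (p ^ n)) l)
      = (p ^ n).totient := by
  have hpp : p.Prime := Fact.out
  have : NeZero (p ^ n) := ⟨pow_ne_zero _ hpp.ne_zero⟩
  have : Fact (1 < p ^ n) := ⟨Nat.one_lt_pow (by omega) hpp.one_lt⟩
  rw [← ZMod.card_units_eq_totient, ← Nat.card_eq_fintype_card]
  apply orderOf_eq_card_of_forall_mem_zpowers
  intro u
  -- Any lift of a unit is a unit, because `ℤ_p` is local.
  obtain ⟨v, hv⟩ := ZMod.ringHom_surjective (PadicInt.toZModPow (p := p) n) (u : ZMod (p ^ n))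
  have : IsLocalHom (PadicInt.toZModPow (p := p) n) :=
    IsLocalHom.of_surjective _ (ZMod.ringHom_surjective _)
  have hvu : IsUnit v := isUnit_of_map_unit (PadicInt.toZModPow (p := p) n) v (hv ▸ u.isUnit)
  obtain ⟨w, rfl⟩ := hvu
  have hr : (0 : ℝ) < (p : ℝ) ^ (-n : ℤ) := by
    have := hpp.pos
    positivity
  obtain ⟨y, hy, k, rfl⟩ := hl.inter_open_nonempty
    ((fun y : ℤ_[p]ˣ => (y : ℤ_[p])) ⁻¹' Metric.ball (w : ℤ_[p]) ((p : ℝ) ^ (-n : ℤ)))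
    (Metric.isOpen_ball.preimage Units.continuous_val) ⟨w, Metric.mem_ball_self hr⟩
  refine ⟨k, ?_⟩
  dsimp only at hy ⊢
  rw [← map_zpow]
  ext
  rw [Units.coe_map, ← hv]
  change PadicInt.toZModPow n _ = _
  rw [toZModPow_eq_iff_dvd_sub, ← Ideal.mem_span_singleton,
    ← PadicInt.norm_le_pow_iff_mem_span_pow]
  rw [Set.mem_preimage, Metric.mem_ball, dist_eq_norm] at hy
  exact hy.le

theorem pow_dvd_one_sub_pow_iff (p : ℕ) [Fact p.Prime] (l : ℤ_[p]ˣ)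
    (hl : Dense ((Subgroup.zpowers l : Subgroup ℤ_[p]ˣ) : Set ℤ_[p]ˣ)) (n i : ℕ) :
    (p : ℤ_[p]) ^ (n + 1) ∣ 1 - (l : ℤ_[p]) ^ i ↔ p ^ n * (p - 1) ∣ i := by
  have hpp : p.Prime := Fact.out
  have h := orderOf_map_toZModPow p l hl (n + 1) (by omega)
  rw [Nat.totient_prime_pow_succ hpp] at h
  rw [← h, orderOf_dvd_iff_pow_eq_one, ← map_pow, ← toZModPow_eq_iff_dvd_sub, Units.ext_iff,
    Units.coe_map, map_one, Units.val_one, Units.val_pow_eq_pow_val]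
  exact eq_comm

theorem stmt_17 (p : ℕ) [Fact p.Prime] (hp : Odd p) (l : ℤ_[p]ˣ)
    (hl : Dense ((Subgroup.zpowers l : Subgroup ℤ_[p]ˣ) : Set ℤ_[p]ˣ)) :
    ∀ i : ℕ, 1 ≤ i →
      (¬ (p - 1) ∣ i → IsUnit ((1 : ℤ_[p]) - (l : ℤ_[p]) ^ i)) ∧
      ((p - 1) ∣ i →
        ((1 : ℤ_[p]) - (l : ℤ_[p]) ^ i).valuation = (padicValNat p i : ℤ) + 1) := by
  have hpp : p.Prime := Fact.out
  intro i hi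
  constructor
  · intro h
    by_contra hu
    apply h
    have := (pow_dvd_one_sub_pow_iff p l hl 0 i).1
    simp only [zero_add, pow_one, pow_zero, one_mul] at this
    apply this
    rwa [← PadicInt.norm_lt_one_iff_dvd, ← PadicInt.mem_nonunits, mem_nonunits_iff]
  · intro h
    have key : ∀ n, (p : ℤ_[p]) ^ (n + 1) ∣ 1 - (l : ℤ_[p]) ^ i ↔ n ≤ padicValNat p i := by
      intro n
      have hc : (p ^ n).Coprime (p - 1) :=
        ((Nat.coprime_self_sub_right hpp.one_lt.le).2 (Nat.coprime_one_right p)).pow_left n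
      rw [pow_dvd_one_sub_pow_iff p l hl, ← padicValNat_dvd_iff_le (by omega)]
      exact ⟨fun hd => (dvd_mul_right _ _).trans hd, fun hd => hc.mul_dvd_of_dvd_of_dvd hd h⟩
    have h0 : 1 - (l : ℤ_[p]) ^ i ≠ 0 := fun h0 => by
      have := (key (padicValNat p i + 1)).1 (h0 ▸ dvd_zero _)
      omega
    have hval : ∀ n, n + 1 ≤ (1 - (l : ℤ_[p]) ^ i).valuation ↔ n ≤ padicValNat p i := by
      intro n
      rw [← key, ← Ideal.mem_span_singleton, PadicInt.mem_span_pow_iff_le_valuation _ h0]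
    have h1 := (hval _).2 le_rfl
    have h2 := (hval (padicValNat p i + 1)).not.2 (by omega)
    omega
end
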